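/- The rule set R_M is bts if and only if the 3CM M halts. -/

import Mathlib

set_option maxHeartbeats 1000000
set_option synthInstance.maxHeartbeats 1000000
set_option synthInstance.maxSize 512

attribute [local instance] Classical.propDecidable

noncomputable section

/-! ### Terms and atoms -/

/-- Variables: ordinary variables `Sum.inl n`, or fresh variables `Sum.inr (c, k)`
introduced by the trigger with code `c` for the head variable with code `k`. -/
abbrev Var : Type := ℕ ⊕ (ℕ × ℕ)

/-- Terms: constants `Sum.inl c` or variables `Sum.inr v`. -/
abbrev FTerm : Type := ℕ ⊕ Var

def ct (n : ℕ) : FTerm := Sum.inl n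
def vt (n : ℕ) : FTerm := Sum.inr (Sum.inl n)

/-- An atom: a predicate name together with its list of arguments. -/
abbrev Atom : Type := ℕ × List FTerm

/-- Active domain: all terms occurring in an atom set. -/
def adom (J : Set Atom) : Set FTerm := {t | ∃ a ∈ J, t ∈ a.2}

def atomVarsF (a : Atom) : Finset Var := (a.2.filterMap Sum.getRight?).toFinset

def varsF (A : Finset Atom) : Finset Var := A.biUnion atomVarsF

def setVars (J : Set Atom) : Set Var := {v | ∃ a ∈ J, Sum.inr v ∈ a.2}

/-! ### Substitutions and homomorphisms -/

abbrev Subst := Var → FTerm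

def applyT (σ : Subst) : FTerm → FTerm
  | Sum.inl c => Sum.inl c
  | Sum.inr v => σ v

def applyA (σ : Subst) (a : Atom) : Atom := (a.1, a.2.map (applyT σ))

def IsHomOn (σ : Subst) (A B : Set Atom) : Prop := ∀ a ∈ A, applyA σ a ∈ B

def HomBetween (A B : Set Atom) : Prop := ∃ σ : Subst, IsHomOn σ A B

def IsRetraction (σ : Subst) (A B : Set Atom) : Prop :=
  IsHomOn σ A B ∧ ∀ v ∈ setVars A ∩ setVars B, σ v = Sum.inr v

/-- Isomorphism of atom sets: a pair of mutually inverse homomorphisms. -/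
def Isomorphic (A B : Set Atom) : Prop :=
  ∃ σ τ : Subst, IsHomOn σ A B ∧ IsHomOn τ B A ∧
    (∀ a ∈ A, applyA τ (applyA σ a) = a) ∧ (∀ b ∈ B, applyA σ (applyA τ b) = b)

/-! ### Rules -/

/-- A rule is a pair (body, head). Its existential variables are the head variables
not occurring in the body; its frontier the variables shared by body and head.
A rule is Datalog when every head variable occurs in the body. -/
abbrev Rule : Type := Finset Atom × Finset Atom

def frontierOf (R : Rule) : Finset Var := varsF R.1 ∩ varsF R.2

def DatRules (Rset : Finset Rule) : Finset Rule := Rset.filter fun R => varsF R.2 ⊆ varsF R.1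
def NDatRules (Rset : Finset Rule) : Finset Rule := Rset.filter fun R => ¬ varsF R.2 ⊆ varsF R.1

/-- Satisfaction of a rule in an atom set. -/
def SatisfiesRule (J : Set Atom) (R : Rule) : Prop :=
  ∀ σ : Subst, IsHomOn σ (R.1 : Set Atom) J →
    ∃ σ' : Subst, (∀ v ∈ varsF R.1, σ' v = σ v) ∧ IsHomOn σ' (R.2 : Set Atom) J

def IsModel (Rset : Finset Rule) (I J : Set Atom) : Prop :=
  (∀ R ∈ Rset, SatisfiesRule J R) ∧ HomBetween I J

/-- BCQ entailment: every model of the KB satisfies the query. -/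
def Entails (Rset : Finset Rule) (I q : Set Atom) : Prop :=
  ∀ J : Set Atom, IsModel Rset I J → HomBetween q J

def IsUniversalModel (Rset : Finset Rule) (I U : Set Atom) : Prop :=
  IsModel Rset I U ∧ ∀ J : Set Atom, IsModel Rset I J → HomBetween U J

/-! ### Triggers -/

structure Trigger where
  rule : Rule
  sub : Subst

/-- Injective code of a trigger (a trigger is determined by its rule and the
restriction of its substitution to the body variables). -/
def Trigger.code (t : Trigger) : ℕ :=
  Encodable.encode (t.rule, (varsF t.rule.1).image fun v => (v, t.sub v))

/-- The canonical extension of the trigger substitution, mapping each existential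
variable `z` to the fresh variable unique for `z` and the trigger. -/
def Trigger.extSub (t : Trigger) : Subst := fun v =>
  if v ∈ varsF t.rule.1 then t.sub v
  else Sum.inr (Sum.inr (t.code, Encodable.encode v))

def Trigger.out (t : Trigger) : Finset Atom := t.rule.2.image (applyA t.extSub)

def Trigger.isOn (t : Trigger) (J : Set Atom) : Prop := IsHomOn t.sub (t.rule.1 : Set Atom) J

/-! ### Chase variants, derivations, chase termination classes -/

inductive ChaseVariant : Type
  | O | SO | R | E
deriving DecidableEq

def Applicable : ChaseVariant → Trigger → Set Atom → Prop
  | .O, t, J => ¬ ((t.out : Set Atom) ⊆ J)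
  | .SO, t, J => ∀ t' : Trigger, t'.rule = t.rule → t'.isOn J →
      (∀ v ∈ frontierOf t.rule, t'.sub v = t.sub v) → ¬ ((t'.out : Set Atom) ⊆ J)
  | .R, t, J => ¬ ∃ σ : Subst, IsRetraction σ (J ∪ (t.out : Set Atom)) J
  | .E, t, J => ¬ ∃ σ : Subst, IsHomOn σ (J ∪ (t.out : Set Atom)) J

def instSeq (I : Set Atom) (steps : ℕ → Option Trigger) : ℕ → Set Atom
  | 0 => I
  | n + 1 => instSeq I steps n ∪
      (match steps n with
        | none => (∅ : Set Atom)
        | some t => (t.out : Set Atom))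

/-- A (possibly infinite) derivation from the knowledge base `⟨Rset, I⟩`. -/
structure Deriv (Rset : Finset Rule) (I : Set Atom) where
  steps : ℕ → Option Trigger
  prefix_closed : ∀ n, steps n = none → steps (n + 1) = none
  valid : ∀ n t, steps n = some t →
    t.rule ∈ Rset ∧ t.isOn (instSeq I steps n) ∧ ¬ ((t.out : Set Atom) ⊆ instSeq I steps n)

def Deriv.inst {Rset : Finset Rule} {I : Set Atom} (D : Deriv Rset I) (n : ℕ) :
    Set Atom := instSeq I D.steps n

def Deriv.res {Rset : Finset Rule} {I : Set Atom} (D : Deriv Rset I) : Set Atom :=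
  ⋃ n, D.inst n

def Deriv.Finite {Rset : Finset Rule} {I : Set Atom} (D : Deriv Rset I) : Prop :=
  ∃ n, D.steps n = none

def Deriv.IsX {Rset : Finset Rule} {I : Set Atom} (X : ChaseVariant)
    (D : Deriv Rset I) : Prop :=
  ∀ n t, D.steps n = some t → Applicable X t (D.inst n)

def Deriv.Fair {Rset : Finset Rule} {I : Set Atom} (X : ChaseVariant)
    (D : Deriv Rset I) : Prop :=
  ∀ i, ∀ t : Trigger, t.rule ∈ Rset → t.isOn (D.inst i) → Applicable X t (D.inst i) →
    ∃ j, i < j ∧ ¬ Applicable X t (D.inst j)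

/-- All-instance, all-derivation chase termination. -/
def CTall (X : ChaseVariant) (Rset : Finset Rule) : Prop :=
  ∀ I : Finset Atom, ∀ D : Deriv Rset (I : Set Atom), D.IsX X → D.Fair X → D.Finite

/-- All-instance, some-derivation chase termination. -/
def CTex (X : ChaseVariant) (Rset : Finset Rule) : Prop :=
  ∀ I : Finset Atom, ∃ D : Deriv Rset (I : Set Atom), D.IsX X ∧ D.Fair X ∧ D.Finite

inductive CTQuant : Type
  | all | ex

def CT (X : ChaseVariant) : CTQuant → Finset Rule → Prop
  | .all => CTall X
  | .ex => CTex X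

/-- The result of some fair `X`-derivation from `⟨Rset, J⟩`. -/
def ChX (X : ChaseVariant) (Rset : Finset Rule) (J : Set Atom) : Set Atom :=
  if h : ∃ D : Deriv Rset J, D.IsX X ∧ D.Fair X then h.choose.res else J

/-! ### Gaifman graph, treewidth, bts -/

def gaifmanAdj (J : Set Atom) (u v : FTerm) : Prop :=
  u ≠ v ∧ ∃ a ∈ J, u ∈ a.2 ∧ v ∈ a.2

/-- The (Gaifman graph of the) atom set `J` has treewidth at most `k`:
there is a tree decomposition all of whose bags have size at most `k + 1`. -/
def TreewidthAtMost (J : Set Atom) (k : ℕ) : Prop :=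
  ∃ (ι : Type) (T : SimpleGraph ι) (bag : ι → Finset FTerm),
    T.Connected ∧ T.IsAcyclic ∧
    (∀ v ∈ adom J, ∃ i, v ∈ bag i) ∧
    (∀ u v : FTerm, gaifmanAdj J u v → ∃ i, u ∈ bag i ∧ v ∈ bag i) ∧
    (∀ v : FTerm, (SimpleGraph.induce {i | v ∈ bag i} T).Preconnected) ∧
    (∀ i, (bag i).card ≤ k + 1)

/-- Bounded-treewidth sets: for every instance, some universal model of bounded treewidth. -/
def IsBts (Rset : Finset Rule) : Prop :=
  ∀ I : Finset Atom, ∃ (k : ℕ) (U : Set Atom),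
    IsUniversalModel Rset (I : Set Atom) U ∧ TreewidthAtMost U k

/-! ### Three-counter machines -/

/-- A three-counter machine: states `0, …, m − 1` (state `0` is initial, standing for `q₁`),
and a partial transition function given by a finite table. -/
structure TCM where
  m : ℕ
  hm : 0 < m
  δ : List ((ℕ × Bool × Bool) × (ℕ × Int × Int))
  keys_nodup : (δ.map Prod.fst).Nodup
  wf : ∀ e ∈ δ, e.1.1 < m ∧ e.2.1 < m ∧ e.2.2.1.natAbs ≤ 1 ∧ e.2.2.2.natAbs ≤ 1

/-- A configuration: state, two counters, and the time counter. -/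
abbrev Config : Type := ℕ × ℕ × ℕ × ℕ

def TCM.step (M : TCM) (q : ℕ) (b1 b2 : Bool) : Option (ℕ × Int × Int) :=
  (M.δ.find? fun e => decide (e.1 = (q, b1, b2))).map Prod.snd

def TCM.next (M : TCM) (C : Config) : Option Config :=
  match M.step C.1 (decide (C.2.1 ≠ 0)) (decide (C.2.2.1 ≠ 0)) with
  | none => none
  | some (q', d1, d2) =>
      some (q', ((C.2.1 : ℤ) + d1).toNat, ((C.2.2.1 : ℤ) + d2).toNat, C.2.2.2 + 1)

def TCM.run (M : TCM) : ℕ → Option Config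
  | 0 => some (0, 0, 0, 0)
  | n + 1 => (M.run n).bind M.next

/-- The machine halts: some reachable configuration has no successor. -/
def TCM.Halts (M : TCM) : Prop := ∃ n C, M.run n = some C ∧ M.next C = none

/-! ### Prime encoding of configurations -/

/-- The least prime strictly greater than `n` (computably). -/
def nextPrime (n : ℕ) : ℕ := Nat.find (Nat.exists_infinite_primes (n + 1))

/-- `prm i` is the `(i+1)`-st prime `p_{i+1}`, i.e. `prm 0 = 2`. -/
def prm : ℕ → ℕ
  | 0 => 2
  | k + 1 => nextPrime (prm k)

/-- Encoding of a configuration as a natural number. -/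
def TCM.enc (M : TCM) (C : Config) : ℕ :=
  prm C.1 * prm M.m ^ C.2.1 * prm (M.m + 1) ^ C.2.2.1 * prm (M.m + 2) ^ C.2.2.2

/-- `p = p₁ ⋯ p_{m+3}`. -/
def TCM.p (M : TCM) : ℕ := ∏ i ∈ Finset.range (M.m + 3), prm i

/-- Decode the state from a residue modulo `M.p`. -/
def TCM.stateOf (M : TCM) (i : ℕ) : Option ℕ :=
  (List.range M.m).find? fun s => decide (prm s ∣ i)

/-- The canonical pair `(q_i, r_i)` realizing the prime encoding of the transitions. -/
def TCM.qr (M : TCM) (i : ℕ) : ℕ × ℕ :=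
  match M.stateOf i with
  | none => (1, 1)
  | some s =>
      let b1 : Bool := decide (prm M.m ∣ i)
      let b2 : Bool := decide (prm (M.m + 1) ∣ i)
      match M.step s b1 b2 with
      | none => (1, 1)
      | some (s', d1, d2) =>
          let e1 : ℤ := if b1 then d1 else max d1 0
          let e2 : ℤ := if b2 then d2 else max d2 0
          let num : ℕ := prm s' * prm (M.m + 2) *
            (if e1 = 1 then prm M.m else 1) * (if e2 = 1 then prm (M.m + 1) else 1)
          let den : ℕ := prm s *
            (if e1 = -1 then prm M.m else 1) * (if e2 = -1 then prm (M.m + 1) else 1)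
          (num / Nat.gcd num den, den / Nat.gcd num den)

def TCM.qi (M : TCM) (i : ℕ) : ℕ := (M.qr i).1
def TCM.ri (M : TCM) (i : ℕ) : ℕ := (M.qr i).2

/-- `g(n) = q_{n mod p} · n / r_{n mod p}`. -/
def TCM.g (M : TCM) (n : ℕ) : ℕ := M.qi (n % M.p) * n / M.ri (n % M.p)

/-- `gᵏ(2)`. -/
def TCM.gIter (M : TCM) (k : ℕ) : ℕ := (M.g)^[k] 2

/-- `G = {gᵏ(2) : k ∈ ℕ}`. -/
def TCM.Gset (M : TCM) : Set ℕ := Set.range M.gIter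

/-! ### The rule set `R_M` -/

def pEnd : ℕ := 0
def pFlood : ℕ := 1
def pS0 : ℕ := 2
def pS : ℕ := 3
def pG : ℕ := 4
def pR (i : ℕ) : ℕ := 5 + 2 * i
def pT (i : ℕ) : ℕ := 6 + 2 * i

/-- `j`-th vertex of an `S`-path of length `n` from variable `a` to variable `b`
with fresh intermediate variables `base + 1, …, base + n − 1`. -/
def pathVar (a b base n j : ℕ) : FTerm :=
  if j = 0 then vt a else if j = n then vt b else vt (base + j)

/-- The atoms of `Sⁿ(x_a, x_b)`: an `S`-path of length `n`. -/
def spath (a b base n : ℕ) : Finset Atom :=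
  (Finset.range n).image fun j =>
    (pS, [pathVar a b base n j, pathVar a b base n (j + 1)])

/-- Rule (1): `S₀(x,y) → S(x,y)`. -/
def ruleS : Rule := ({(pS0, [vt 0, vt 1])}, {(pS, [vt 0, vt 1])})

/-- Rule (2): `R_i(x,y) ∧ S(y,z) → R_{i+1}(x,z)` (indices modulo `p`). -/
def ruleR (M : TCM) (i : ℕ) : Rule :=
  ({(pR i, [vt 0, vt 1]), (pS, [vt 1, vt 2])}, {(pR ((i + 1) % M.p), [vt 0, vt 2])})

/-- Rule (3): `T_i(x,y,z) ∧ S^{r_i}(y,y′) ∧ S^{q_i}(z,z′) → T_i(x,y′,z′)`. -/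
def ruleT (M : TCM) (i : ℕ) : Rule :=
  (({(pT i, [vt 0, vt 1, vt 2])} : Finset Atom) ∪ spath 1 3 10 (M.ri i) ∪
      spath 2 4 (11 + M.ri i) (M.qi i),
    {(pT i, [vt 0, vt 3, vt 4])})

/-- Rule (4): `S(x,y) → Flood(y)`. -/
def ruleFloodProp : Rule := ({(pS, [vt 0, vt 1])}, {(pFlood, [vt 1])})

/-- Rule (5): `End(x) → S(x,x)`. -/
def ruleSEnd : Rule := ({(pEnd, [vt 0])}, {(pS, [vt 0, vt 0])})

/-- Rule (6): `S²(x,y) → G(x,y)`. -/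
def ruleGInit : Rule := (spath 0 1 10 2, {(pG, [vt 0, vt 1])})

/-- Rule (7): `G(x,y) ∧ R_i(x,y) ∧ T_i(x,y,z) → G(x,z)`. -/
def ruleGStep (i : ℕ) : Rule :=
  ({(pG, [vt 0, vt 1]), (pR i, [vt 0, vt 1]), (pT i, [vt 0, vt 1, vt 2])},
    {(pG, [vt 0, vt 2])})

/-- Rule (8): `Flood(x) ∧ Flood(y) ∧ Flood(z) → G(x,y) ∧ ⋀_{j<p} (R_j(x,y) ∧ T_j(x,y,z))`. -/
def ruleFloodGen (M : TCM) : Rule :=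
  ({(pFlood, [vt 0]), (pFlood, [vt 1]), (pFlood, [vt 2])},
    ({(pG, [vt 0, vt 1])} : Finset Atom) ∪
      (Finset.range M.p).biUnion fun j =>
        {(pR j, [vt 0, vt 1]), (pT j, [vt 0, vt 1, vt 2])})

/-- Rule (9): `G(y,z) ∧ End(z) → ∃x (S₀(x,y) ∧ R₀(x,x) ∧ ⋀_{j<p} T_j(x,x,x))`. -/
def ruleEx (M : TCM) : Rule :=
  ({(pG, [vt 1, vt 2]), (pEnd, [vt 2])},
    ({(pS0, [vt 0, vt 1]), (pR 0, [vt 0, vt 0])} : Finset Atom) ∪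
      (Finset.range M.p).biUnion fun j => {(pT j, [vt 0, vt 0, vt 0])})

/-- The rule set `R_M`. -/
def RM (M : TCM) : Finset Rule :=
  ({ruleS, ruleFloodProp, ruleSEnd, ruleGInit, ruleFloodGen M, ruleEx M} : Finset Rule) ∪
    (Finset.range M.p).biUnion fun i => {ruleR M i, ruleT M i, ruleGStep i}

/-- The alternating Datalog/non-Datalog chase steps `Step^X_n`. -/
def StepX (X : ChaseVariant) (M : TCM) : ℕ → Set Atom → Set Atom
  | 0, I => ChX X (DatRules (RM M)) I
  | n + 1, I => ChX X (DatRules (RM M)) (ChX X (NDatRules (RM M)) (StepX X M n I))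

/-- The constant `w`, the "well of positivity". -/
def wC : FTerm := ct 0

/-- The instance `{End(w)}`. -/
def IE : Set Atom := {(pEnd, [wC])}

/-- Membership in the signature of `R_M` (predicate together with its arity). -/
def InSig (M : TCM) (a : Atom) : Prop :=
  ((a.1 = pEnd ∨ a.1 = pFlood) ∧ a.2.length = 1) ∨
  ((a.1 = pS0 ∨ a.1 = pS ∨ a.1 = pG ∨ ∃ i < M.p, a.1 = pR i) ∧ a.2.length = 2) ∨
  ((∃ i < M.p, a.1 = pT i) ∧ a.2.length = 3)

/-- The critical instance: all atoms `P(w, …, w)` over the signature of `R_M`. -/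
def Crit (M : TCM) : Set Atom := {a | InSig M a ∧ ∀ t ∈ a.2, t = wC}

/-- An `S`-path of length `k` from `s` to `t` in `J`. -/
def SPath (J : Set Atom) : ℕ → FTerm → FTerm → Prop
  | 0, s, t => s = t
  | k + 1, s, t => ∃ u, (pS, [s, u]) ∈ J ∧ SPath J k u t

/-- The restriction `J|_S`: atoms of `J` all of whose terms belong to `S`. -/
def restrictTo (J : Set Atom) (S : Set FTerm) : Set Atom := {a ∈ J | ∀ t ∈ a.2, t ∈ S}

/-- An explicit injective encoding of three-counter machines by natural numbers. -/
def encodeTCM (M : TCM) : ℕ := Encodable.encode (M.m, M.δ)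

set_option maxHeartbeats 1000000

/-! ### Helly property of subtrees -/

/-- A vertex set closed under paths. -/
def PConv {ι : Type} (T : SimpleGraph ι) (A : Set ι) : Prop :=
  ∀ i ∈ A, ∀ j ∈ A, ∀ p : T.Walk i j, p.IsPath → ∀ x ∈ p.support, x ∈ A

lemma pconv_of_preconnected {ι : Type} {T : SimpleGraph ι} (hT : T.IsAcyclic) (A : Set ι)
    (h : (SimpleGraph.induce A T).Preconnected) : PConv T A := by
  intro i hi j hj p hp x hx
  obtain ⟨w⟩ := h ⟨i, hi⟩ ⟨j, hj⟩
  let w' : T.Walk i j := w.map (SimpleGraph.Embedding.induce A).toHom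
  have hw' : ∀ y ∈ w'.support, y ∈ A := by
    intro y hy
    have hy2 : y ∈ (w.map (SimpleGraph.Embedding.induce A).toHom).support := hy
    rw [SimpleGraph.Walk.support_map] at hy2
    obtain ⟨z, _, rfl⟩ := List.mem_map.1 hy2
    exact z.2
  have := (hT.subsingleton_path i j).elim ⟨p, hp⟩ w'.toPath
  have h2 : p = w'.bypass := congrArg Subtype.val this
  rw [h2] at hx
  exact hw' x (w'.support_bypass_subset_support hx)

lemma first_hit {ι : Type} {T : SimpleGraph ι} (S : Set ι) {c b : ι} (Q : T.Walk c b)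
    (hQ : Q.IsPath) (hb : b ∈ S) :
    ∃ m ∈ S, ∃ W : T.Walk c m, W.IsPath ∧ (∀ x ∈ W.support, x ∈ Q.support) ∧
      (∀ x ∈ W.support, x ∈ S → x = m) := by
  induction Q with
  | nil => exact ⟨_, hb, SimpleGraph.Walk.nil, by simp, by simp, by simp⟩
  | @cons u v w h Q' ih =>
    by_cases hu : u ∈ S
    · exact ⟨u, hu, SimpleGraph.Walk.nil, by simp, by simp, by simp⟩
    · rw [SimpleGraph.Walk.cons_isPath_iff] at hQ
      obtain ⟨m, hm, W, hW, h1, h2⟩ := ih hQ.1 hb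
      refine ⟨m, hm, SimpleGraph.Walk.cons h W, ?_, ?_, ?_⟩
      · rw [SimpleGraph.Walk.cons_isPath_iff]
        exact ⟨hW, fun hh => hQ.2 (h1 _ hh)⟩
      · intro x hx
        simp only [SimpleGraph.Walk.support_cons, List.mem_cons] at hx ⊢
        rcases hx with hx | hx
        · exact Or.inl hx
        · exact Or.inr (h1 _ hx)
      · intro x hx hxS
        simp only [SimpleGraph.Walk.support_cons, List.mem_cons] at hx
        rcases hx with hx | hx
        · exact absurd (hx ▸ hxS) hu
        · exact h2 x hx hxS

lemma helly3 {ι : Type} {T : SimpleGraph ι} (hc : T.Connected) (A B C : Set ι)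
    (hA : PConv T A) (hB : PConv T B) (hC : PConv T C)
    (hBC : (B ∩ C).Nonempty) (hAC : (A ∩ C).Nonempty) (hAB : (A ∩ B).Nonempty) :
    ∃ m, m ∈ A ∧ m ∈ B ∧ m ∈ C := by
  obtain ⟨a, haB, haC⟩ := hBC
  obtain ⟨b, hbA, hbC⟩ := hAC
  obtain ⟨c, hcA, hcB⟩ := hAB
  obtain ⟨P0⟩ := hc.preconnected a b
  obtain ⟨Q0⟩ := hc.preconnected c b
  have hP := P0.bypass_isPath
  have hQ := Q0.bypass_isPath
  obtain ⟨m, hm, W, hW, h1, h2⟩ :=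
    first_hit {x | x ∈ P0.bypass.support} Q0.bypass hQ (by simp)
  have hm' : m ∈ P0.bypass.support := hm
  refine ⟨m, hA c hcA b hbA _ hQ m (h1 _ (by simp)), ?_, hC a haC b hbC _ hP m hm⟩
  let V := (P0.bypass.takeUntil m hm').reverse
  have hV : V.IsPath := (hP.takeUntil hm').reverse
  refine hB c hcB a haB (W.append V) ?_ m (by simp)
  rw [SimpleGraph.Walk.isPath_def, SimpleGraph.Walk.support_append]
  have hVn := (SimpleGraph.Walk.isPath_def _).1 hV
  refine List.Nodup.append ((SimpleGraph.Walk.isPath_def _).1 hW) hVn.tail ?_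
  intro x hx hxV
  have hxV' : x ∈ V.support := List.mem_of_mem_tail hxV
  have hxP : x ∈ P0.bypass.support := by
    simp only [V, SimpleGraph.Walk.support_reverse, List.mem_reverse] at hxV'
    exact SimpleGraph.Walk.support_takeUntil_subset_support _ _ hxV'
  have := h2 x hx hxP
  subst this
  rw [← SimpleGraph.Walk.cons_tail_support V] at hVn
  exact (List.nodup_cons.1 hVn).1 hxV

lemma helly {ι κ : Type} {T : SimpleGraph ι} (hc : T.Connected) (s : Finset κ) :
    s.Nonempty → ∀ A : κ → Set ι, (∀ i, PConv T (A i)) →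
    (∀ i ∈ s, ∀ j ∈ s, (A i ∩ A j).Nonempty) → ∃ x, ∀ i ∈ s, x ∈ A i := by
  intro hs
  induction hs using Finset.Nonempty.cons_induction with
  | singleton b =>
    intro A _ h
    obtain ⟨x, hx, _⟩ := h b (by simp) b (by simp)
    exact ⟨x, by simpa using hx⟩
  | cons b s hb hs ih =>
    intro A hA h
    obtain ⟨x, hx⟩ := ih (fun i => A i ∩ A b)
      (fun i u hu v hv p hp y hy =>
        ⟨hA i u hu.1 v hv.1 p hp y hy, hA b u hu.2 v hv.2 p hp y hy⟩)
      (by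
        intro i hi j hj
        obtain ⟨m, h1, h2, h3⟩ := helly3 hc (A i) (A j) (A b) (hA i) (hA j) (hA b)
          (h j (by simp [hj]) b (by simp)) (h i (by simp [hi]) b (by simp))
          (h i (by simp [hi]) j (by simp [hj]))
        exact ⟨m, ⟨h1, h3⟩, ⟨h2, h3⟩⟩)
    refine ⟨x, ?_⟩
    intro i hi
    rw [Finset.mem_cons] at hi
    rcases hi with rfl | hi
    · obtain ⟨j, hj⟩ := hs
      exact (hx j hj).2
    · exact (hx i hi).1

/-- An infinite clique excludes bounded treewidth. -/
lemma not_tw_of_clique (J : Set Atom) (k : ℕ) (y : ℕ → FTerm) (hy : Function.Injective y)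
    (h : ∀ m n, m ≤ n → ∃ a ∈ J, y m ∈ a.2 ∧ y n ∈ a.2) : ¬ TreewidthAtMost J k := by
  rintro ⟨ι, T, bag, hc, hac, _, hedge, hconn, hcard⟩
  rename_i hcov
  have key : ∀ m n, m ≤ n → ∃ i, y m ∈ bag i ∧ y n ∈ bag i := by
    intro m n hmn
    obtain ⟨a, ha, h1, h2⟩ := h m n hmn
    by_cases hh : y m = y n
    · obtain ⟨i, hi⟩ := hcov (y m) ⟨a, ha, h1⟩
      exact ⟨i, hi, hh ▸ hi⟩
    · exact hedge _ _ ⟨hh, a, ha, h1, h2⟩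
  obtain ⟨i, hi⟩ := helly hc (Finset.range (k + 2)) (by simp) (fun n => {i | y n ∈ bag i})
    (fun n => pconv_of_preconnected hac _ (hconn (y n)))
    (by
      intro m _ n _
      rcases le_total m n with hmn | hmn
      · obtain ⟨i, h1, h2⟩ := key m n hmn
        exact ⟨i, h1, h2⟩
      · obtain ⟨i, h1, h2⟩ := key n m hmn
        exact ⟨i, h2, h1⟩)
  have hsub : (Finset.range (k + 2)).image y ⊆ bag i := by
    intro t ht
    obtain ⟨n, hn, rfl⟩ := Finset.mem_image.1 ht
    exact hi n hn
  have := Finset.card_le_card hsub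
  rw [Finset.card_image_of_injective _ hy, Finset.card_range] at this
  have := hcard i
  omega

/-! ### Arithmetic of the prime encoding -/

lemma nextPrime_spec (n : ℕ) : n + 1 ≤ nextPrime n ∧ (nextPrime n).Prime :=
  Nat.find_spec (Nat.exists_infinite_primes (n + 1))

lemma prm_prime (i : ℕ) : (prm i).Prime := by
  cases i with
  | zero => exact Nat.prime_two
  | succ k => exact (nextPrime_spec _).2

lemma prm_strictMono : StrictMono prm :=
  strictMono_nat_of_lt_succ fun k => (nextPrime_spec (prm k)).1

lemma prm_inj {i j : ℕ} : prm i = prm j ↔ i = j := prm_strictMono.injective.eq_iff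

lemma TCM.p_pos (M : TCM) : 0 < M.p :=
  Finset.prod_pos fun i _ => (prm_prime i).pos

lemma prm_dvd_mod (M : TCM) {s : ℕ} (hs : s < M.m + 3) (n : ℕ) :
    prm s ∣ n % M.p ↔ prm s ∣ n := by
  have : prm s ∣ M.p := Finset.dvd_prod_of_mem prm (Finset.mem_range.2 hs)
  exact Nat.dvd_mod_iff this

lemma prm_dvd_prm {i j : ℕ} : prm i ∣ prm j ↔ i = j := by
  rw [Nat.prime_dvd_prime_iff_eq (prm_prime i) (prm_prime j), prm_inj]

lemma prm_dvd_prm_pow {i j e : ℕ} : prm i ∣ prm j ^ e ↔ i = j ∧ e ≠ 0 := by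
  constructor
  · intro h
    refine ⟨prm_dvd_prm.1 ((prm_prime i).dvd_of_dvd_pow h), ?_⟩
    rintro rfl
    simp only [pow_zero, Nat.dvd_one] at h
    exact (prm_prime i).one_lt.ne' h
  · rintro ⟨rfl, h⟩
    exact dvd_pow_self _ h

lemma prm_dvd_enc (M : TCM) (C : Config) (s : ℕ) :
    prm s ∣ M.enc C ↔ s = C.1 ∨ (s = M.m ∧ C.2.1 ≠ 0) ∨ (s = M.m + 1 ∧ C.2.2.1 ≠ 0) ∨
      (s = M.m + 2 ∧ C.2.2.2 ≠ 0) := by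
  unfold TCM.enc
  rw [(prm_prime s).dvd_mul, (prm_prime s).dvd_mul, (prm_prime s).dvd_mul, prm_dvd_prm,
    prm_dvd_prm_pow, prm_dvd_prm_pow, prm_dvd_prm_pow]
  tauto

lemma stateOf_enc (M : TCM) (C : Config) (hC : C.1 < M.m) :
    M.stateOf (M.enc C % M.p) = some C.1 := by
  have key : ∀ s, s < M.m → (prm s ∣ M.enc C % M.p ↔ s = C.1) := by
    intro s hs
    rw [prm_dvd_mod M (by omega), prm_dvd_enc]
    constructor
    · rintro (h | h | h | h) <;> omega
    · intro h; exact Or.inl h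
  unfold TCM.stateOf
  cases hf : (List.range M.m).find? (fun s => decide (prm s ∣ M.enc C % M.p)) with
  | none =>
    rw [List.find?_eq_none] at hf
    exact absurd ((key _ hC).2 rfl) (by simpa using hf C.1 (by simpa using hC))
  | some s =>
    have h1 := List.find?_some hf
    have h2 := List.mem_of_find?_eq_some hf
    rw [List.mem_range] at h2
    rw [(key s h2).1 (by simpa using h1)]

lemma step_wf (M : TCM) {q b1 b2 q' d1 d2} (h : M.step q b1 b2 = some (q', d1, d2)) :
    q' < M.m ∧ d1.natAbs ≤ 1 ∧ d2.natAbs ≤ 1 := by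
  unfold TCM.step at h
  rw [Option.map_eq_some_iff] at h
  obtain ⟨e, he, h2⟩ := h
  have := M.wf e (List.mem_of_find?_eq_some he)
  rw [h2] at this
  exact this.2

/-- The counter update against the exponent changes. -/
lemma counter_update (P c : ℕ) (d : ℤ) (hd : d.natAbs ≤ 1) (e : ℤ)
    (he : e = if decide (c ≠ 0) = true then d else max d 0) :
    ∃ K : ℕ, P ^ c = (if e = -1 then P else 1) * P ^ K ∧
      P ^ ((c : ℤ) + d).toNat = (if e = 1 then P else 1) * P ^ K := by
  have hd' : d = -1 ∨ d = 0 ∨ d = 1 := by omega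
  rcases Nat.eq_zero_or_pos c with rfl | hc
  · rcases hd' with rfl | rfl | rfl
    · refine ⟨0, ?_⟩; simp [he]
    · refine ⟨0, ?_⟩; simp [he]
    · refine ⟨0, ?_⟩; simp [he]
  · obtain ⟨c, rfl⟩ : ∃ k, c = k + 1 := ⟨c - 1, by omega⟩
    have he' : e = d := by simpa using he
    subst he'
    rcases hd' with rfl | rfl | rfl
    · refine ⟨c, ?_, ?_⟩
      · simp [pow_succ']
      · have : (((c + 1 : ℕ) : ℤ) + -1).toNat = c := by omega
        rw [this]; simp
    · refine ⟨c + 1, ?_, ?_⟩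
      · simp
      · have : (((c + 1 : ℕ) : ℤ) + 0).toNat = c + 1 := by omega
        rw [this]; simp
    · refine ⟨c + 1, ?_, ?_⟩
      · simp
      · have : (((c + 1 : ℕ) : ℤ) + 1).toNat = c + 1 + 1 := by omega
        rw [this]; simp [pow_succ']

lemma qr_pos (M : TCM) (i : ℕ) : 0 < M.qi i ∧ 0 < M.ri i := by
  have hp : ∀ j, 0 < prm j := fun j => (prm_prime j).pos
  have hite : ∀ (c : Prop) [Decidable c] (j : ℕ), 0 < (if c then prm j else 1) := by
    intro c _ j; split_ifs
    · exact hp j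
    · exact one_pos
  unfold TCM.qi TCM.ri TCM.qr
  split
  · simp
  · dsimp only
    split
    · simp
    · rename_i s _ _ s' d1 d2 _
      dsimp only
      constructor
      · refine Nat.div_pos (Nat.le_of_dvd ?_ (Nat.gcd_dvd_left _ _)) (Nat.gcd_pos_of_pos_left _ ?_)
          <;> exact Nat.mul_pos (Nat.mul_pos (Nat.mul_pos (hp _) (hp _)) (hite _ _)) (hite _ _)
      · refine Nat.div_pos (Nat.le_of_dvd ?_ (Nat.gcd_dvd_right _ _)) (Nat.gcd_pos_of_pos_right _ ?_)
          <;> exact Nat.mul_pos (Nat.mul_pos (hp _) (hite _ _)) (hite _ _)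

lemma flags_enc (M : TCM) (C : Config) (hC : C.1 < M.m) :
    decide (prm M.m ∣ M.enc C % M.p) = decide (C.2.1 ≠ 0) ∧
    decide (prm (M.m + 1) ∣ M.enc C % M.p) = decide (C.2.2.1 ≠ 0) := by
  constructor
  · rw [decide_eq_decide, prm_dvd_mod M (by omega), prm_dvd_enc]
    constructor
    · rintro (h | h | h | h) <;> omega
    · intro h; exact Or.inr (Or.inl ⟨rfl, h⟩)
  · rw [decide_eq_decide, prm_dvd_mod M (by omega), prm_dvd_enc]
    constructor
    · rintro (h | h | h | h) <;> omega
    · intro h; exact Or.inr (Or.inr (Or.inl ⟨rfl, h⟩))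

lemma g_enc_none (M : TCM) (C : Config) (hC : C.1 < M.m) (h : M.next C = none) :
    M.g (M.enc C) = M.enc C := by
  have hs : M.step C.1 (decide (C.2.1 ≠ 0)) (decide (C.2.2.1 ≠ 0)) = none := by
    unfold TCM.next at h
    split at h
    · assumption
    · cases h
  have : M.qr (M.enc C % M.p) = (1, 1) := by
    unfold TCM.qr
    rw [stateOf_enc M C hC]
    dsimp only
    rw [(flags_enc M C hC).1, (flags_enc M C hC).2, hs]
  unfold TCM.g TCM.qi TCM.ri
  rw [this]; simp

lemma g_enc_some (M : TCM) (C C' : Config) (hC : C.1 < M.m) (h : M.next C = some C') :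
    C'.1 < M.m ∧ C'.2.2.2 = C.2.2.2 + 1 ∧
    M.ri (M.enc C % M.p) ∣ M.enc C ∧ M.g (M.enc C) = M.enc C' := by
  unfold TCM.next at h
  split at h
  · cases h
  rename_i s' d1 d2 hs
  cases h
  obtain ⟨hq, hd1, hd2⟩ := step_wf M hs
  refine ⟨hq, rfl, ?_⟩
  obtain ⟨K1, h1, h1'⟩ := counter_update (prm M.m) C.2.1 d1 hd1 _ rfl
  obtain ⟨K2, h2, h2'⟩ := counter_update (prm (M.m + 1)) C.2.2.1 d2 hd2 _ rfl
  obtain ⟨num, den, K, hqr, hA, hB, hden⟩ : ∃ num den K : ℕ,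
      M.qr (M.enc C % M.p) = (num / Nat.gcd num den, den / Nat.gcd num den) ∧
      M.enc C = den * K ∧
      M.enc (s', ((C.2.1 : ℤ) + d1).toNat, ((C.2.2.1 : ℤ) + d2).toNat, C.2.2.2 + 1) = num * K ∧
      0 < den := by
    refine ⟨prm s' * prm (M.m + 2) *
        (if (if decide (C.2.1 ≠ 0) = true then d1 else max d1 0) = 1 then prm M.m else 1) *
        (if (if decide (C.2.2.1 ≠ 0) = true then d2 else max d2 0) = 1
          then prm (M.m + 1) else 1),
      prm C.1 *
        (if (if decide (C.2.1 ≠ 0) = true then d1 else max d1 0) = -1 then prm M.m else 1) *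
        (if (if decide (C.2.2.1 ≠ 0) = true then d2 else max d2 0) = -1
          then prm (M.m + 1) else 1),
      prm M.m ^ K1 * prm (M.m + 1) ^ K2 * prm (M.m + 2) ^ C.2.2.2, ?_, ?_, ?_, ?_⟩
    · unfold TCM.qr
      rw [stateOf_enc M C hC]
      dsimp only
      rw [(flags_enc M C hC).1, (flags_enc M C hC).2, hs]
    · unfold TCM.enc
      rw [h1, h2]
      ring
    · unfold TCM.enc
      dsimp only
      rw [h1', h2', pow_succ]
      ring
    · have hite : ∀ (c : Prop) [Decidable c] (j : ℕ), 0 < (if c then prm j else 1) := by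
        intro c _ j; split_ifs
        · exact (prm_prime j).pos
        · exact one_pos
      exact Nat.mul_pos (Nat.mul_pos (prm_prime _).pos (hite _ _)) (hite _ _)
  have hgpos : 0 < Nat.gcd num den := Nat.gcd_pos_of_pos_right _ hden
  obtain ⟨a, ha⟩ := Nat.gcd_dvd_left num den
  obtain ⟨b, hb⟩ := Nat.gcd_dvd_right num den
  have hqa : num / Nat.gcd num den = a := Nat.div_eq_of_eq_mul_right hgpos ha
  have hrb : den / Nat.gcd num den = b := Nat.div_eq_of_eq_mul_right hgpos hb
  have hbpos : 0 < b := by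
    rcases Nat.eq_zero_or_pos b with rfl | h
    · simp at hb; omega
    · exact h
  have hA' : M.enc C = b * (Nat.gcd num den * K) := by
    rw [hA]; conv_lhs => rw [hb]
    ring
  have hri : M.ri (M.enc C % M.p) = b := by
    unfold TCM.ri; rw [hqr]; exact hrb
  have hqi : M.qi (M.enc C % M.p) = a := by
    unfold TCM.qi; rw [hqr]; exact hqa
  refine ⟨?_, ?_⟩
  · rw [hri, hA']; exact dvd_mul_right _ _
  · unfold TCM.g
    rw [hri, hqi, hB]
    apply Nat.div_eq_of_eq_mul_right hbpos
    rw [hA']; conv_rhs => rw [ha]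
    ring

lemma run_gIter (M : TCM) : ∀ n C, M.run n = some C →
    C.1 < M.m ∧ C.2.2.2 = n ∧ M.gIter n = M.enc C := by
  intro n
  induction n with
  | zero =>
    intro C h
    simp only [TCM.run, Option.some.injEq] at h
    subst h
    refine ⟨M.hm, rfl, ?_⟩
    simp [TCM.gIter, TCM.enc, prm]
  | succ n ih =>
    intro C h
    simp only [TCM.run] at h
    rw [Option.bind_eq_some_iff] at h
    obtain ⟨C0, h0, h1⟩ := h
    obtain ⟨i1, i2, i3⟩ := ih C0 h0
    obtain ⟨j1, j2, _, j4⟩ := g_enc_some M C0 C i1 h1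
    refine ⟨j1, by omega, ?_⟩
    unfold TCM.gIter at i3 ⊢
    rw [Function.iterate_succ_apply', i3, j4]

lemma halts_bounded (M : TCM) (h : M.Halts) : ∃ N, ∀ k, M.gIter k < N := by
  obtain ⟨n, C, hr, hn⟩ := h
  obtain ⟨h1, _, h3⟩ := run_gIter M n C hr
  have hg := g_enc_none M C h1 hn
  have hconst : ∀ k, M.gIter (n + k) = M.enc C := by
    intro k
    induction k with
    | zero => exact h3
    | succ k ih =>
      unfold TCM.gIter at ih ⊢
      rw [← Nat.add_assoc, Function.iterate_succ_apply', ih, hg]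
  refine ⟨∑ k ∈ Finset.range (n + 1), M.gIter k + 1, ?_⟩
  have hle : ∀ k ≤ n, M.gIter k < ∑ k ∈ Finset.range (n + 1), M.gIter k + 1 := by
    intro k hk
    exact Nat.lt_succ_of_le
      (Finset.single_le_sum (f := M.gIter) (fun _ _ => Nat.zero_le _)
        (Finset.mem_range.2 (by omega)))
  intro k
  rcases le_total k n with hk | hk
  · exact hle k hk
  · obtain ⟨j, rfl⟩ := Nat.exists_eq_add_of_le hk
    rw [hconst j, ← hconst 0]
    exact hle n le_rfl

lemma not_halts_run (M : TCM) (h : ¬ M.Halts) (n : ℕ) : ∃ C C', M.run n = some C ∧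
    M.next C = some C' := by
  have hstep : ∀ n C, M.run n = some C → ∃ C', M.next C = some C' := by
    intro n C hC
    rcases hx : M.next C with _ | C'
    · exact absurd ⟨n, C, hC, hx⟩ h
    · exact ⟨C', rfl⟩
  have : ∃ C, M.run n = some C := by
    induction n with
    | zero => exact ⟨_, rfl⟩
    | succ n ih =>
      obtain ⟨C, hC⟩ := ih
      obtain ⟨C', hC'⟩ := hstep n C hC
      exact ⟨C', by simp [TCM.run, hC, hC']⟩
  obtain ⟨C, hC⟩ := this
  obtain ⟨C', hC'⟩ := hstep n C hC
  exact ⟨C, C', hC, hC'⟩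

lemma not_halts_gIter (M : TCM) (h : ¬ M.Halts) (n : ℕ) :
    n ≤ M.gIter n ∧ M.ri (M.gIter n % M.p) ∣ M.gIter n := by
  obtain ⟨C, C', hC, hC'⟩ := not_halts_run M h n
  obtain ⟨h1, h2, h3⟩ := run_gIter M n C hC
  obtain ⟨_, _, h4, _⟩ := g_enc_some M C C' h1 hC'
  rw [h3]
  refine ⟨?_, h4⟩
  have hp : ∀ j, 0 < prm j := fun j => (prm_prime j).pos
  unfold TCM.enc
  rw [h2]
  calc n ≤ prm (M.m + 2) ^ n := (Nat.lt_pow_self (prm_prime _).one_lt).le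
    _ ≤ _ := Nat.le_mul_of_pos_left _ (Nat.mul_pos (Nat.mul_pos (hp _) (pow_pos (hp _) _))
      (pow_pos (hp _) _))

/-! ### Semantic description of the models of `R_M` -/

/-- Closure of an atom set under the rules of `R_M`, spelled out on terms. -/
structure Clo (M : TCM) (J : Set Atom) : Prop where
  s : ∀ x y, (pS0, [x, y]) ∈ J → (pS, [x, y]) ∈ J
  r : ∀ i, i < M.p → ∀ x y z, (pR i, [x, y]) ∈ J → (pS, [y, z]) ∈ J →
    (pR ((i + 1) % M.p), [x, z]) ∈ J
  t : ∀ i, i < M.p → ∀ x, ∀ u v : ℕ → FTerm, (pT i, [x, u 0, v 0]) ∈ J →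
    (∀ j < M.ri i, (pS, [u j, u (j + 1)]) ∈ J) → (∀ j < M.qi i, (pS, [v j, v (j + 1)]) ∈ J) →
    (pT i, [x, u (M.ri i), v (M.qi i)]) ∈ J
  fl : ∀ x y, (pS, [x, y]) ∈ J → (pFlood, [y]) ∈ J
  se : ∀ x, (pEnd, [x]) ∈ J → (pS, [x, x]) ∈ J
  gi : ∀ x y z, (pS, [x, y]) ∈ J → (pS, [y, z]) ∈ J → (pG, [x, z]) ∈ J
  gs : ∀ i, i < M.p → ∀ x y z, (pG, [x, y]) ∈ J → (pR i, [x, y]) ∈ J →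
    (pT i, [x, y, z]) ∈ J → (pG, [x, z]) ∈ J
  fg : ∀ x y z, (pFlood, [x]) ∈ J → (pFlood, [y]) ∈ J → (pFlood, [z]) ∈ J →
    (pG, [x, y]) ∈ J ∧ ∀ j < M.p, (pR j, [x, y]) ∈ J ∧ (pT j, [x, y, z]) ∈ J
  ex : ∀ y z, (pG, [y, z]) ∈ J → (pEnd, [z]) ∈ J →
    ∃ x, (pS0, [x, y]) ∈ J ∧ (pR 0, [x, x]) ∈ J ∧ ∀ j < M.p, (pT j, [x, x, x]) ∈ J

lemma mem_varsF {A : Finset Atom} {v : Var} : v ∈ varsF A ↔ ∃ a ∈ A, Sum.inr v ∈ a.2 := by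
  unfold varsF atomVarsF
  simp only [Finset.mem_biUnion, List.mem_toFinset, List.mem_filterMap]
  constructor
  · rintro ⟨a, ha, t, ht, h⟩
    refine ⟨a, ha, ?_⟩
    rcases t with c | w
    · simp at h
    · simp at h; subst h; exact ht
  · rintro ⟨a, ha, h⟩
    exact ⟨a, ha, _, h, rfl⟩

lemma applyA_congr {σ τ : Subst} {a : Atom} (h : ∀ v, Sum.inr v ∈ a.2 → σ v = τ v) :
    applyA σ a = applyA τ a := by
  unfold applyA
  congr 1
  apply List.map_congr_left
  intro t ht
  rcases t with c | v
  · rfl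
  · exact h v ht

lemma sat_datalog {J : Set Atom} {R : Rule}
    (hd : ∀ a ∈ R.2, ∀ v, Sum.inr v ∈ a.2 → ∃ b ∈ R.1, Sum.inr v ∈ b.2) :
    SatisfiesRule J R ↔ ∀ σ : Subst, IsHomOn σ (R.1 : Set Atom) J →
      IsHomOn σ (R.2 : Set Atom) J := by
  constructor
  · intro h σ hσ a ha
    obtain ⟨σ', h1, h2⟩ := h σ hσ
    have := h2 a ha
    rwa [applyA_congr (τ := σ)] at this
    intro v hv
    exact h1 v (mem_varsF.2 (hd a ha v hv))
  · intro h σ hσ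
    exact ⟨σ, fun _ _ => rfl, h σ hσ⟩

/-- Substitution of the ordinary variables. -/
def sb (x : ℕ → FTerm) : Subst
  | Sum.inl n => x n
  | Sum.inr _ => ct 0

lemma vt_ne {a b : ℕ} : vt a = vt b ↔ a = b := by simp [vt]

lemma hom_spath {σ : Subst} {J : Set Atom} {a b base n : ℕ} :
    IsHomOn σ (spath a b base n : Set Atom) J ↔
      ∀ j < n, (pS, [applyT σ (pathVar a b base n j), applyT σ (pathVar a b base n (j + 1))]) ∈ J := by
  unfold IsHomOn spath
  simp [applyA]

lemma hom_union {σ : Subst} {A B : Finset Atom} {J : Set Atom} :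
    IsHomOn σ ((A ∪ B : Finset Atom) : Set Atom) J ↔
      IsHomOn σ (A : Set Atom) J ∧ IsHomOn σ (B : Set Atom) J := by
  unfold IsHomOn
  simp only [Finset.coe_union, Set.mem_union]
  constructor
  · intro h; exact ⟨fun a ha => h a (Or.inl ha), fun a ha => h a (Or.inr ha)⟩
  · rintro ⟨h1, h2⟩ a (ha | ha)
    · exact h1 a ha
    · exact h2 a ha

lemma sat_ruleS {J : Set Atom} : SatisfiesRule J ruleS ↔
    ∀ x y, (pS0, [x, y]) ∈ J → (pS, [x, y]) ∈ J := by
  rw [sat_datalog (by simp [ruleS])]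
  simp only [ruleS, IsHomOn, applyA, applyT, vt, Finset.coe_singleton, Set.mem_singleton_iff, forall_eq, List.map]
  constructor
  · intro h x y
    exact h (sb fun n => if n = 0 then x else y)
  · intro h σ; exact h _ _

lemma sat_ruleFloodProp {J : Set Atom} : SatisfiesRule J ruleFloodProp ↔
    ∀ x y, (pS, [x, y]) ∈ J → (pFlood, [y]) ∈ J := by
  rw [sat_datalog (by simp [ruleFloodProp] <;> constructor <;> intros <;> tauto)]
  simp only [ruleFloodProp, IsHomOn, applyA, applyT, vt, Finset.coe_singleton, Set.mem_singleton_iff, forall_eq, List.map]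
  constructor
  · intro h x y
    exact h (sb fun n => if n = 0 then x else y)
  · intro h σ; exact h _ _

lemma sat_ruleSEnd {J : Set Atom} : SatisfiesRule J ruleSEnd ↔
    ∀ x, (pEnd, [x]) ∈ J → (pS, [x, x]) ∈ J := by
  rw [sat_datalog (by simp [ruleSEnd])]
  simp only [ruleSEnd, IsHomOn, applyA, applyT, vt, Finset.coe_singleton, Set.mem_singleton_iff, forall_eq, List.map]
  constructor
  · intro h x
    exact h (sb fun n => x)
  · intro h σ; exact h _

lemma sat_ruleGInit {J : Set Atom} : SatisfiesRule J ruleGInit ↔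
    ∀ x y z, (pS, [x, y]) ∈ J → (pS, [y, z]) ∈ J → (pG, [x, z]) ∈ J := by
  have hsp : spath 0 1 10 2 = {(pS, [vt 0, vt 11]), (pS, [vt 11, vt 1])} := by
    ext a
    simp only [spath, Finset.mem_image, Finset.mem_range, Finset.mem_insert, Finset.mem_singleton]
    constructor
    · rintro ⟨j, hj, rfl⟩
      interval_cases j <;> simp [pathVar]
    · rintro (rfl | rfl)
      · exact ⟨0, by simp [pathVar]⟩
      · exact ⟨1, by simp [pathVar]⟩
  rw [sat_datalog (by simp [ruleGInit, hsp] <;> constructor <;> intros <;> tauto)]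
  simp only [ruleGInit, hsp, IsHomOn, applyA, applyT, vt, Finset.coe_singleton, Finset.coe_insert,
    Set.mem_insert_iff, Set.mem_singleton_iff, forall_eq_or_imp, forall_eq, List.map]
  constructor
  · intro h x y z h1 h2
    exact h (sb fun n => if n = 0 then x else if n = 11 then y else z) ⟨h1, h2⟩
  · intro h σ h1; exact h _ _ _ h1.1 h1.2

lemma sat_ruleGStep {J : Set Atom} {i : ℕ} : SatisfiesRule J (ruleGStep i) ↔
    ∀ x y z, (pG, [x, y]) ∈ J → (pR i, [x, y]) ∈ J →
    (pT i, [x, y, z]) ∈ J → (pG, [x, z]) ∈ J := by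
  rw [sat_datalog (by simp [ruleGStep] <;> constructor <;> intros <;> tauto)]
  simp only [ruleGStep, IsHomOn, applyA, applyT, vt, Finset.coe_singleton, Finset.coe_insert,
    Set.mem_insert_iff, Set.mem_singleton_iff, forall_eq_or_imp, forall_eq, List.map]
  constructor
  · intro h x y z h1 h2 h3
    exact h (sb fun n => if n = 0 then x else if n = 1 then y else z) ⟨h1, h2, h3⟩
  · intro h σ h1; exact h _ _ _ h1.1 h1.2.1 h1.2.2

lemma sat_ruleR {M : TCM} {J : Set Atom} {i : ℕ} : SatisfiesRule J (ruleR M i) ↔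
    ∀ x y z, (pR i, [x, y]) ∈ J → (pS, [y, z]) ∈ J →
    (pR ((i + 1) % M.p), [x, z]) ∈ J := by
  rw [sat_datalog (by simp [ruleR] <;> constructor <;> intros <;> tauto)]
  simp only [ruleR, IsHomOn, applyA, applyT, vt, Finset.coe_singleton, Finset.coe_insert,
    Set.mem_insert_iff, Set.mem_singleton_iff, forall_eq_or_imp, forall_eq, List.map]
  constructor
  · intro h x y z h1 h2
    exact h (sb fun n => if n = 0 then x else if n = 1 then y else z) ⟨h1, h2⟩
  · intro h σ h1; exact h _ _ _ h1.1 h1.2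

lemma sat_ruleFloodGen {M : TCM} {J : Set Atom} : SatisfiesRule J (ruleFloodGen M) ↔
    ∀ x y z, (pFlood, [x]) ∈ J → (pFlood, [y]) ∈ J → (pFlood, [z]) ∈ J →
    (pG, [x, y]) ∈ J ∧ ∀ j < M.p, (pR j, [x, y]) ∈ J ∧ (pT j, [x, y, z]) ∈ J := by
  have hh : ∀ σ : Subst, IsHomOn σ ((ruleFloodGen M).2 : Set Atom) J ↔
      ((pG, [σ (Sum.inl 0), σ (Sum.inl 1)]) ∈ J ∧ ∀ j < M.p,
        (pR j, [σ (Sum.inl 0), σ (Sum.inl 1)]) ∈ J ∧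
        (pT j, [σ (Sum.inl 0), σ (Sum.inl 1), σ (Sum.inl 2)]) ∈ J) := by
    intro σ
    unfold ruleFloodGen
    rw [hom_union]
    refine and_congr (by simp [IsHomOn, applyA, applyT, vt]) ?_
    constructor
    · intro h j hj
      refine ⟨h (pR j, [vt 0, vt 1]) ?_, h (pT j, [vt 0, vt 1, vt 2]) ?_⟩
      · simp only [Finset.mem_coe, Finset.mem_biUnion]
        exact ⟨j, by simpa using hj, by simp⟩
      · simp only [Finset.mem_coe, Finset.mem_biUnion]
        exact ⟨j, by simpa using hj, by simp⟩
    · intro h a ha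
      simp only [Finset.mem_coe, Finset.mem_biUnion, Finset.mem_range, Finset.mem_insert,
        Finset.mem_singleton] at ha
      obtain ⟨j, hj, rfl | rfl⟩ := ha
      · exact (h j hj).1
      · exact (h j hj).2
  rw [sat_datalog]
  · simp only [hh]
    have hb : ∀ σ : Subst, IsHomOn σ ((ruleFloodGen M).1 : Set Atom) J ↔
      ((pFlood, [σ (Sum.inl 0)]) ∈ J ∧ (pFlood, [σ (Sum.inl 1)]) ∈ J ∧
        (pFlood, [σ (Sum.inl 2)]) ∈ J) := by
      intro σ
      simp [ruleFloodGen, IsHomOn, applyA, applyT, vt]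
    simp only [hb]
    constructor
    · intro h x y z h1 h2 h3
      exact h (sb fun n => if n = 0 then x else if n = 1 then y else z) ⟨h1, h2, h3⟩
    · intro h σ h1; exact h _ _ _ h1.1 h1.2.1 h1.2.2
  · intro a ha v hv
    have : v = Sum.inl 0 ∨ v = Sum.inl 1 ∨ v = Sum.inl 2 := by
      simp only [ruleFloodGen, Finset.mem_union, Finset.mem_biUnion, Finset.mem_range,
        Finset.mem_insert, Finset.mem_singleton] at ha
      rcases ha with rfl | ⟨j, hj, rfl | rfl⟩
      · simp [vt] at hv; tauto
      · simp [vt] at hv; tauto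
      · simp [vt] at hv; tauto
    rcases this with rfl | rfl | rfl
    · exact ⟨(pFlood, [vt 0]), by simp [ruleFloodGen], by simp [vt]⟩
    · exact ⟨(pFlood, [vt 1]), by simp [ruleFloodGen], by simp [vt]⟩
    · exact ⟨(pFlood, [vt 2]), by simp [ruleFloodGen], by simp [vt]⟩

lemma sat_ruleEx {M : TCM} {J : Set Atom} : SatisfiesRule J (ruleEx M) ↔
    ∀ y z, (pG, [y, z]) ∈ J → (pEnd, [z]) ∈ J →
    ∃ x, (pS0, [x, y]) ∈ J ∧ (pR 0, [x, x]) ∈ J ∧ ∀ j < M.p, (pT j, [x, x, x]) ∈ J := by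
  have hh : ∀ σ : Subst, IsHomOn σ ((ruleEx M).2 : Set Atom) J ↔
      ((pS0, [σ (Sum.inl 0), σ (Sum.inl 1)]) ∈ J ∧ (pR 0, [σ (Sum.inl 0), σ (Sum.inl 0)]) ∈ J ∧
        ∀ j < M.p, (pT j, [σ (Sum.inl 0), σ (Sum.inl 0), σ (Sum.inl 0)]) ∈ J) := by
    intro σ
    unfold ruleEx
    rw [hom_union, ← and_assoc]
    refine and_congr (by simp [IsHomOn, applyA, applyT, vt]) ?_
    constructor
    · intro h j hj
      refine h (pT j, [vt 0, vt 0, vt 0]) ?_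
      simp only [Finset.mem_coe, Finset.mem_biUnion]
      exact ⟨j, by simpa using hj, by simp⟩
    · intro h a ha
      simp only [Finset.mem_coe, Finset.mem_biUnion, Finset.mem_range,
        Finset.mem_singleton] at ha
      obtain ⟨j, hj, rfl⟩ := ha
      exact h j hj
  have hb : ∀ σ : Subst, IsHomOn σ ((ruleEx M).1 : Set Atom) J ↔
      ((pG, [σ (Sum.inl 1), σ (Sum.inl 2)]) ∈ J ∧ (pEnd, [σ (Sum.inl 2)]) ∈ J) := by
    intro σ
    simp [ruleEx, IsHomOn, applyA, applyT, vt]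
  have hv : ∀ v, v ∈ varsF (ruleEx M).1 ↔ v = Sum.inl 1 ∨ v = Sum.inl 2 := by
    intro v
    rw [mem_varsF]
    simp [ruleEx, vt]
  unfold SatisfiesRule
  simp only [hh, hb, hv]
  constructor
  · intro h y z h1 h2
    obtain ⟨σ', a, b⟩ := h (sb fun n => if n = 1 then y else z) ⟨h1, h2⟩
    have := a (Sum.inl 1) (Or.inl rfl)
    rw [this] at b
    exact ⟨σ' (Sum.inl 0), b⟩
  · intro h σ h1
    obtain ⟨x, hx⟩ := h _ _ h1.1 h1.2
    refine ⟨fun v => if v = Sum.inl 0 then x else σ v, ?_, ?_⟩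
    · rintro v (rfl | rfl) <;> simp
    · simpa using hx

lemma sat_ruleT {M : TCM} {J : Set Atom} {i : ℕ} : SatisfiesRule J (ruleT M i) ↔
    ∀ x, ∀ u v : ℕ → FTerm, (pT i, [x, u 0, v 0]) ∈ J →
    (∀ j < M.ri i, (pS, [u j, u (j + 1)]) ∈ J) → (∀ j < M.qi i, (pS, [v j, v (j + 1)]) ∈ J) →
    (pT i, [x, u (M.ri i), v (M.qi i)]) ∈ J := by
  obtain ⟨hq, hr⟩ := qr_pos M i
  have hb : ∀ σ : Subst, IsHomOn σ ((ruleT M i).1 : Set Atom) J ↔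
      ((pT i, [σ (Sum.inl 0), σ (Sum.inl 1), σ (Sum.inl 2)]) ∈ J ∧
      (∀ j < M.ri i, (pS, [applyT σ (pathVar 1 3 10 (M.ri i) j),
        applyT σ (pathVar 1 3 10 (M.ri i) (j + 1))]) ∈ J)) ∧
      (∀ j < M.qi i, (pS, [applyT σ (pathVar 2 4 (11 + M.ri i) (M.qi i) j),
        applyT σ (pathVar 2 4 (11 + M.ri i) (M.qi i) (j + 1))]) ∈ J) := by
    intro σ
    unfold ruleT
    rw [hom_union, hom_union, hom_spath, hom_spath]
    refine and_congr_left' (and_congr_left' ?_)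
    simp [IsHomOn, applyA, applyT, vt]
  rw [sat_datalog]
  · simp only [hb]
    have hh : ∀ σ : Subst, IsHomOn σ ((ruleT M i).2 : Set Atom) J ↔
      (pT i, [σ (Sum.inl 0), σ (Sum.inl 3), σ (Sum.inl 4)]) ∈ J := by
      intro σ
      simp [ruleT, IsHomOn, applyA, applyT, vt]
    simp only [hh]
    constructor
    · intro h x u v h1 h2 h3
      let σ : Subst := sb fun n => if n = 0 then x else if n = 1 then u 0 else if n = 2 then v 0
        else if n = 3 then u (M.ri i) else if n = 4 then v (M.qi i)
        else if n < 11 + M.ri i then u (n - 10) else v (n - (11 + M.ri i))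
      have e1 : ∀ j ≤ M.ri i, applyT σ (pathVar 1 3 10 (M.ri i) j) = u j := by
        intro j hj
        unfold pathVar
        split_ifs with a b
        · subst a; simp [σ, vt, applyT, sb]
        · subst b; simp [σ, vt, applyT, sb]
        · simp only [σ, vt, applyT, sb]
          rw [if_neg (by omega), if_neg (by omega), if_neg (by omega), if_neg (by omega),
            if_neg (by omega), if_pos (by omega)]
          congr 1; omega
      have e2 : ∀ j ≤ M.qi i, applyT σ (pathVar 2 4 (11 + M.ri i) (M.qi i) j) = v j := by
        intro j hj
        unfold pathVar
        split_ifs with a b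
        · subst a; simp [σ, vt, applyT, sb]
        · subst b; simp [σ, vt, applyT, sb]
        · simp only [σ, vt, applyT, sb]
          rw [if_neg (by omega), if_neg (by omega), if_neg (by omega), if_neg (by omega),
            if_neg (by omega), if_neg (by omega)]
          congr 1; omega
      have := h σ ⟨⟨by simpa [σ, sb] using h1, ?_⟩, ?_⟩
      · simpa [σ, sb] using this
      · intro j hj
        rw [e1 j (by omega), e1 (j + 1) (by omega)]
        exact h2 j hj
      · intro j hj
        rw [e2 j (by omega), e2 (j + 1) (by omega)]
        exact h3 j hj
    · rintro h σ ⟨⟨h1, h2⟩, h3⟩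
      have := h (σ (Sum.inl 0)) (fun j => applyT σ (pathVar 1 3 10 (M.ri i) j))
        (fun j => applyT σ (pathVar 2 4 (11 + M.ri i) (M.qi i) j))
        (by simpa [pathVar, applyT, vt] using h1) h2 h3
      simpa [pathVar, applyT, vt, hq.ne', hr.ne'] using this
  · intro a ha v hv
    have : v = Sum.inl 0 ∨ v = Sum.inl 3 ∨ v = Sum.inl 4 := by
      simp only [ruleT, Finset.mem_singleton] at ha
      subst ha
      simpa [vt] using hv
    rcases this with rfl | rfl | rfl
    · exact ⟨(pT i, [vt 0, vt 1, vt 2]), by simp [ruleT], by simp [vt]⟩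
    · refine ⟨(pS, [pathVar 1 3 10 (M.ri i) (M.ri i - 1), pathVar 1 3 10 (M.ri i) (M.ri i - 1 + 1)]), ?_, ?_⟩
      · simp only [ruleT, Finset.mem_union]
        left; right
        exact Finset.mem_image.2 ⟨M.ri i - 1, by simp [hr], rfl⟩
      · rw [Nat.sub_add_cancel hr]
        simp [pathVar, hr.ne', vt]
    · refine ⟨(pS, [pathVar 2 4 (11 + M.ri i) (M.qi i) (M.qi i - 1), pathVar 2 4 (11 + M.ri i) (M.qi i) (M.qi i - 1 + 1)]), ?_, ?_⟩
      · simp only [ruleT, Finset.mem_union]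
        right
        exact Finset.mem_image.2 ⟨M.qi i - 1, by simp [hq], rfl⟩
      · rw [Nat.sub_add_cancel hq]
        simp [pathVar, hq.ne', vt]

lemma sat_iff (M : TCM) (J : Set Atom) : (∀ R ∈ RM M, SatisfiesRule J R) ↔ Clo M J := by
  have hmem : ∀ R, R ∈ RM M ↔ (R = ruleS ∨ R = ruleFloodProp ∨ R = ruleSEnd ∨ R = ruleGInit ∨
      R = ruleFloodGen M ∨ R = ruleEx M) ∨
      ∃ i < M.p, R = ruleR M i ∨ R = ruleT M i ∨ R = ruleGStep i := by
    intro R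
    simp only [RM, Finset.mem_union, Finset.mem_insert, Finset.mem_singleton, Finset.mem_biUnion,
      Finset.mem_range]
  constructor
  · intro h
    exact
      { s := sat_ruleS.1 (h _ ((hmem _).2 (by tauto)))
        r := fun i hi => sat_ruleR.1 (h _ ((hmem _).2 (Or.inr ⟨i, hi, by tauto⟩)))
        t := fun i hi => sat_ruleT.1 (h _ ((hmem _).2 (Or.inr ⟨i, hi, by tauto⟩)))
        fl := sat_ruleFloodProp.1 (h _ ((hmem _).2 (by tauto)))
        se := sat_ruleSEnd.1 (h _ ((hmem _).2 (by tauto)))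
        gi := sat_ruleGInit.1 (h _ ((hmem _).2 (by tauto)))
        gs := fun i hi => sat_ruleGStep.1 (h _ ((hmem _).2 (Or.inr ⟨i, hi, by tauto⟩)))
        fg := sat_ruleFloodGen.1 (h _ ((hmem _).2 (by tauto)))
        ex := sat_ruleEx.1 (h _ ((hmem _).2 (by tauto))) }
  · intro h R hR
    rcases (hmem R).1 hR with (rfl | rfl | rfl | rfl | rfl | rfl) | ⟨i, hi, rfl | rfl | rfl⟩
    · exact sat_ruleS.2 h.s
    · exact sat_ruleFloodProp.2 h.fl
    · exact sat_ruleSEnd.2 h.se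
    · exact sat_ruleGInit.2 h.gi
    · exact sat_ruleFloodGen.2 h.fg
    · exact sat_ruleEx.2 h.ex
    · exact sat_ruleR.2 (h.r i hi)
    · exact sat_ruleT.2 (h.t i hi)
    · exact sat_ruleGStep.2 (h.gs i hi)

/-! ### Non-halting machines -/

/-- The terms of the infinite chain. -/
def cx : ℕ → FTerm
  | 0 => wC
  | n + 1 => vt n

lemma cx_inj : Function.Injective cx := by
  intro a b h
  cases a <;> cases b <;> simp_all [cx, wC, ct, vt]

/-- The maximal model on the infinite chain. -/
def Jmax : Set Atom := {a |
  (a.1 = pEnd ∧ a.2 = [cx 0]) ∨ (a.1 = pS0 ∧ ∃ n, a.2 = [cx (n + 1), cx n]) ∨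
  (a.1 = pS ∧ ∃ n, a.2 = [cx n, cx (n - 1)]) ∨
  ((a.1 = 1 ∨ 4 ≤ a.1) ∧ ∀ t ∈ a.2, ∃ n, t = cx n)}

lemma Jmax_full {q : ℕ} {l : List FTerm} (hq : q = 1 ∨ 4 ≤ q) :
    ((q, l) : Atom) ∈ Jmax ↔ ∀ t ∈ l, ∃ n, t = cx n := by
  simp only [Jmax, Set.mem_setOf_eq, pEnd, pS0, pS]
  constructor
  · rintro (⟨h, _⟩ | ⟨h, _⟩ | ⟨h, _⟩ | ⟨_, h⟩)
    · omega
    · omega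
    · omega
    · exact h
  · intro h; exact Or.inr (Or.inr (Or.inr ⟨hq, h⟩))

lemma Jmax_End {x : FTerm} : ((pEnd, [x]) : Atom) ∈ Jmax ↔ x = cx 0 := by
  simp [Jmax, pEnd, pS0, pS]

lemma Jmax_S0 {x y : FTerm} : ((pS0, [x, y]) : Atom) ∈ Jmax ↔ ∃ n, x = cx (n + 1) ∧ y = cx n := by
  simp [Jmax, pEnd, pS0, pS]

lemma Jmax_S {x y : FTerm} : ((pS, [x, y]) : Atom) ∈ Jmax ↔ ∃ n, x = cx n ∧ y = cx (n - 1) := by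
  simp [Jmax, pEnd, pS0, pS]

lemma Jmax_Flood {x : FTerm} : ((pFlood, [x]) : Atom) ∈ Jmax ↔ ∃ n, x = cx n := by
  rw [Jmax_full (by simp [pFlood])]; simp

lemma Jmax_G {x y : FTerm} : ((pG, [x, y]) : Atom) ∈ Jmax ↔ (∃ n, x = cx n) ∧ ∃ n, y = cx n := by
  rw [Jmax_full (by simp [pG])]; simp

lemma Jmax_R {i : ℕ} {x y : FTerm} :
    ((pR i, [x, y]) : Atom) ∈ Jmax ↔ (∃ n, x = cx n) ∧ ∃ n, y = cx n := by
  rw [Jmax_full (by simp only [pR]; omega)]; simp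

lemma Jmax_T {i : ℕ} {x y z : FTerm} : ((pT i, [x, y, z]) : Atom) ∈ Jmax ↔
    (∃ n, x = cx n) ∧ (∃ n, y = cx n) ∧ ∃ n, z = cx n := by
  rw [Jmax_full (by simp only [pT]; omega)]; simp

lemma Jmax_clo (M : TCM) : Clo M Jmax where
  s := by
    intro x y h
    obtain ⟨n, rfl, rfl⟩ := Jmax_S0.1 h
    exact Jmax_S.2 ⟨n + 1, rfl, rfl⟩
  r := by
    intro i _ x y z h1 h2
    obtain ⟨n, rfl, rfl⟩ := Jmax_S.1 h2
    exact Jmax_R.2 ⟨(Jmax_R.1 h1).1, _, rfl⟩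
  t := by
    intro i _ x u v h1 h2 h3
    obtain ⟨hq, hr⟩ := qr_pos M i
    obtain ⟨a, _, ha⟩ := Jmax_S.1 (h2 (M.ri i - 1) (by omega))
    obtain ⟨b, _, hb⟩ := Jmax_S.1 (h3 (M.qi i - 1) (by omega))
    rw [Nat.sub_add_cancel hr] at ha
    rw [Nat.sub_add_cancel hq] at hb
    exact Jmax_T.2 ⟨(Jmax_T.1 h1).1, ⟨_, ha⟩, ⟨_, hb⟩⟩
  fl := by
    intro x y h
    obtain ⟨n, rfl, rfl⟩ := Jmax_S.1 h
    exact Jmax_Flood.2 ⟨_, rfl⟩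
  se := by
    intro x h
    rw [Jmax_End.1 h]
    exact Jmax_S.2 ⟨0, rfl, rfl⟩
  gi := by
    intro x y z h1 h2
    obtain ⟨n, rfl, _⟩ := Jmax_S.1 h1
    obtain ⟨m, _, rfl⟩ := Jmax_S.1 h2
    exact Jmax_G.2 ⟨⟨_, rfl⟩, _, rfl⟩
  gs := by
    intro i _ x y z h1 _ h3
    exact Jmax_G.2 ⟨(Jmax_G.1 h1).1, (Jmax_T.1 h3).2.2⟩
  fg := by
    intro x y z h1 h2 h3
    have h1 := Jmax_Flood.1 h1
    have h2 := Jmax_Flood.1 h2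
    have h3 := Jmax_Flood.1 h3
    exact ⟨Jmax_G.2 ⟨h1, h2⟩, fun j _ => ⟨Jmax_R.2 ⟨h1, h2⟩, Jmax_T.2 ⟨h1, h2, h3⟩⟩⟩
  ex := by
    intro y z h1 _
    obtain ⟨⟨n, rfl⟩, _⟩ := Jmax_G.1 h1
    exact ⟨cx (n + 1), Jmax_S0.2 ⟨n, rfl, rfl⟩, Jmax_R.2 ⟨⟨_, rfl⟩, _, rfl⟩,
      fun j _ => Jmax_T.2 ⟨⟨_, rfl⟩, ⟨_, rfl⟩, _, rfl⟩⟩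

/-- Existential successor condition of rule (9). -/
def IsSucc (M : TCM) (J : Set Atom) (y x : FTerm) : Prop :=
  (pS0, [x, y]) ∈ J ∧ (pR 0, [x, x]) ∈ J ∧ ∀ j < M.p, (pT j, [x, x, x]) ∈ J

lemma chain_G {M : TCM} {U : Set Atom} (hU : Clo M U) (hM : ¬ M.Halts) (y : ℕ → FTerm) (n : ℕ)
    (hw : (pEnd, [y 0]) ∈ U) (hy : ∀ j < n, IsSucc M U (y j) (y (j + 1))) :
    (∀ d, (pR (d % M.p), [y n, y (n - d)]) ∈ U) ∧ (pG, [y n, y 0]) ∈ U := by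
  have hp := M.p_pos
  have hS : ∀ j, (pS, [y (n - j), y (n - (j + 1))]) ∈ U := by
    intro j
    by_cases hj : n ≤ j
    · rw [Nat.sub_eq_zero_of_le hj, Nat.sub_eq_zero_of_le (by omega)]
      exact hU.se _ hw
    · have h1 : n - j = (n - (j + 1)) + 1 := by omega
      rw [h1]
      exact hU.s _ _ (hy (n - (j + 1)) (by omega)).1
  have h0 : (pR 0, [y n, y n]) ∈ U ∧ ∀ j < M.p, (pT j, [y n, y n, y n]) ∈ U := by
    rcases n with _ | n
    · have hf := hU.fl _ _ (hU.se _ hw)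
      have := (hU.fg _ _ _ hf hf hf).2
      exact ⟨(this 0 hp).1, fun j hj => (this j hj).2⟩
    · exact (hy n (by omega)).2
  have hR : ∀ d, (pR (d % M.p), [y n, y (n - d)]) ∈ U := by
    intro d
    induction d with
    | zero => simpa using h0.1
    | succ d ih =>
      have := hU.r (d % M.p) (Nat.mod_lt _ hp) _ _ _ ih (hS d)
      rwa [Nat.mod_add_mod] at this
  have hT : ∀ i < M.p, ∀ k, (pT i, [y n, y (n - M.ri i * k), y (n - M.qi i * k)]) ∈ U := by
    intro i hi k
    induction k with
    | zero => simpa using h0.2 i hi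
    | succ k ih =>
      exact hU.t i hi (y n) (fun j => y (n - (M.ri i * k + j))) (fun j => y (n - (M.qi i * k + j)))
        ih (fun j _ => hS _) (fun j _ => hS _)
  have hG : ∀ k, (pG, [y n, y (n - M.gIter k)]) ∈ U := by
    intro k
    induction k with
    | zero => exact hU.gi _ _ _ (hS 0) (hS 1)
    | succ k ih =>
      obtain ⟨_, c, hc⟩ := not_halts_gIter M hM k
      have hi : M.gIter k % M.p < M.p := Nat.mod_lt _ hp
      have h1 := hT _ hi c
      rw [← hc] at h1
      have h2 := hU.gs _ hi _ _ _ ih (hR _) h1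
      have hg : M.gIter (k + 1) = M.qi (M.gIter k % M.p) * c := by
        have : M.gIter (k + 1) = M.g (M.gIter k) := Function.iterate_succ_apply' _ _ _
        rw [this, TCM.g]
        apply Nat.div_eq_of_eq_mul_right (qr_pos M _).2
        calc M.qi (M.gIter k % M.p) * M.gIter k
            = M.qi (M.gIter k % M.p) * (M.ri (M.gIter k % M.p) * c) := congrArg _ hc
          _ = _ := by ring
      rw [hg]
      exact h2
  refine ⟨hR, ?_⟩
  have := hG n
  rwa [Nat.sub_eq_zero_of_le (not_halts_gIter M hM n).1] at this

lemma not_bts_of_not_halts (M : TCM) (hM : ¬ M.Halts) : ¬ IsBts (RM M) := by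
  intro hb
  obtain ⟨k, U, ⟨⟨hsat, σ0, hσ0⟩, huniv⟩, htw⟩ := hb {(pEnd, [wC])}
  have hU := (sat_iff M U).1 hsat
  have hw : (pEnd, [wC]) ∈ U := hσ0 (pEnd, [wC]) (by simp)
  let pick : FTerm → FTerm := fun t => if h : ∃ x, IsSucc M U t x then h.choose else t
  let y : ℕ → FTerm := fun n => pick^[n] wC
  have hpick : ∀ t, (∃ x, IsSucc M U t x) → IsSucc M U t (pick t) := by
    intro t h
    simp only [pick, dif_pos h]
    exact h.choose_spec
  have hall : ∀ n, ∀ j < n, IsSucc M U (y j) (y (j + 1)) := by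
    intro n
    induction n with
    | zero => intro j hj; omega
    | succ n ih =>
      intro j hj
      by_cases hjn : j < n
      · exact ih j hjn
      · obtain rfl : j = n := by omega
        have hG := (chain_G hU hM y j hw ih).2
        have := hpick (y j) (hU.ex _ _ hG hw)
        have e : y (j + 1) = pick (y j) := Function.iterate_succ_apply' _ _ _
        rwa [e]
  obtain ⟨σ, hσ⟩ := huniv Jmax ⟨(sat_iff M Jmax).2 (Jmax_clo M), fun _ => ct 0, by
    intro a ha
    have : a = (pEnd, [wC]) := by simpa using ha
    subst this
    exact Jmax_End.2 rfl⟩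
  have hσy : ∀ n, applyT σ (y n) = cx n := by
    intro n
    induction n with
    | zero => rfl
    | succ n ih =>
      have h1 := hσ _ (hall (n + 1) n (by omega)).1
      have h2 : (pS0, [applyT σ (y (n + 1)), applyT σ (y n)]) ∈ Jmax := h1
      obtain ⟨m, e1, e2⟩ := Jmax_S0.1 h2
      rw [ih] at e2
      rw [e1, cx_inj e2]
  have hinj : Function.Injective y := by
    intro a b h
    apply cx_inj
    rw [← hσy a, ← hσy b, h]
  refine not_tw_of_clique U k y hinj ?_ htw
  intro m n hmn
  refine ⟨_, (chain_G hU hM y n hw (hall n)).1 (n - m), ?_, ?_⟩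
  · have : n - (n - m) = m := by omega
    simp [this]
  · simp

/-! ### The Skolem chase and halting machines -/

/-- The Skolem chase of `I`, with `f` the Skolem function of rule (9). -/
inductive Ch (M : TCM) (I : Set Atom) (f : FTerm → FTerm) : Atom → Prop
  | base (a : Atom) : a ∈ I → Ch M I f a
  | s (x y : FTerm) : Ch M I f (pS0, [x, y]) → Ch M I f (pS, [x, y])
  | r (i : ℕ) (x y z : FTerm) : i < M.p → Ch M I f (pR i, [x, y]) → Ch M I f (pS, [y, z]) →
      Ch M I f (pR ((i + 1) % M.p), [x, z])
  | t (i : ℕ) (x : FTerm) (u v : ℕ → FTerm) : i < M.p → Ch M I f (pT i, [x, u 0, v 0]) →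
      (∀ j, j < M.ri i → Ch M I f (pS, [u j, u (j + 1)])) →
      (∀ j, j < M.qi i → Ch M I f (pS, [v j, v (j + 1)])) →
      Ch M I f (pT i, [x, u (M.ri i), v (M.qi i)])
  | fl (x y : FTerm) : Ch M I f (pS, [x, y]) → Ch M I f (pFlood, [y])
  | se (x : FTerm) : Ch M I f (pEnd, [x]) → Ch M I f (pS, [x, x])
  | gi (x y z : FTerm) : Ch M I f (pS, [x, y]) → Ch M I f (pS, [y, z]) → Ch M I f (pG, [x, z])
  | gs (i : ℕ) (x y z : FTerm) : i < M.p → Ch M I f (pG, [x, y]) → Ch M I f (pR i, [x, y]) →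
      Ch M I f (pT i, [x, y, z]) → Ch M I f (pG, [x, z])
  | fgG (x y : FTerm) : Ch M I f (pFlood, [x]) → Ch M I f (pFlood, [y]) →
      Ch M I f (pG, [x, y])
  | fgR (j : ℕ) (x y : FTerm) : j < M.p → Ch M I f (pFlood, [x]) → Ch M I f (pFlood, [y]) →
      Ch M I f (pR j, [x, y])
  | fgT (j : ℕ) (x y z : FTerm) : j < M.p → Ch M I f (pFlood, [x]) → Ch M I f (pFlood, [y]) →
      Ch M I f (pFlood, [z]) → Ch M I f (pT j, [x, y, z])
  | exS (y z : FTerm) : Ch M I f (pG, [y, z]) → Ch M I f (pEnd, [z]) → Ch M I f (pS0, [f y, y])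
  | exR (y z : FTerm) : Ch M I f (pG, [y, z]) → Ch M I f (pEnd, [z]) →
      Ch M I f (pR 0, [f y, f y])
  | exT (j : ℕ) (y z : FTerm) : j < M.p → Ch M I f (pG, [y, z]) → Ch M I f (pEnd, [z]) →
      Ch M I f (pT j, [f y, f y, f y])

lemma ch_clo (M : TCM) (I : Set Atom) (f : FTerm → FTerm) : Clo M {a | Ch M I f a} where
  s := fun x y => Ch.s x y
  r := fun i hi x y z => Ch.r i x y z hi
  t := fun i hi x u v => Ch.t i x u v hi
  fl := fun x y => Ch.fl x y
  se := fun x => Ch.se x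
  gi := fun x y z => Ch.gi x y z
  gs := fun i hi x y z => Ch.gs i x y z hi
  fg := fun x y z h1 h2 h3 =>
    ⟨Ch.fgG x y h1 h2, fun j hj => ⟨Ch.fgR j x y hj h1 h2, Ch.fgT j x y z hj h1 h2 h3⟩⟩
  ex := fun y z h1 h2 => ⟨f y, Ch.exS y z h1 h2, Ch.exR y z h1 h2, fun j hj => Ch.exT j y z hj h1 h2⟩

/-- Requirements on the Skolem function. -/
structure Sk (I : Set Atom) (f : FTerm → FTerm) : Prop where
  inj : Function.Injective f
  var : ∀ t, ∃ v, f t = Sum.inr v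
  fresh : ∀ t, f t ∉ adom I

lemma exists_sk (I : Finset Atom) : ∃ f, Sk (I : Set Atom) f := by
  have hfin : (adom (I : Set Atom)).Finite := by
    have : adom (I : Set Atom) = ⋃ a ∈ I, {t | t ∈ a.2} := by
      ext t; simp [adom]
    rw [this]
    exact Set.Finite.biUnion (Finset.finite_toSet I) fun a _ => List.finite_toSet a.2
  have hvt : Function.Injective vt := fun a b h => vt_ne.1 h
  obtain ⟨B, hB⟩ := (hfin.preimage hvt.injOn).bddAbove
  refine ⟨fun t => vt (B + 1 + Encodable.encode t), ?_, fun t => ⟨_, rfl⟩, ?_⟩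
  · intro a b h
    have := hvt h
    exact Encodable.encode_injective (by omega)
  · intro t ht
    have := hB ht
    omega

lemma Sk.unique {I : Set Atom} {f : FTerm → FTerm} (hf : Sk I f) {x y : FTerm} (hx : x ∈ adom I)
    (hy : y ∈ adom I) : ∀ {n m : ℕ}, f^[n] x = f^[m] y → n = m ∧ x = y := by
  intro n
  induction n with
  | zero =>
    intro m h
    cases m with
    | zero => exact ⟨rfl, h⟩
    | succ m =>
      rw [Function.iterate_succ_apply'] at h
      exact absurd (show f (f^[m] y) ∈ adom I from h ▸ hx) (hf.fresh _)
  | succ n ih =>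
    intro m h
    cases m with
    | zero =>
      rw [Function.iterate_succ_apply'] at h
      exact absurd (show f (f^[n] x) ∈ adom I from (show f (f^[n] x) = y from h) ▸ hy) (hf.fresh _)
    | succ m =>
      rw [Function.iterate_succ_apply', Function.iterate_succ_apply'] at h
      obtain ⟨h1, h2⟩ := ih (hf.inj h)
      exact ⟨by omega, h2⟩

lemma Sk.not_adom {I : Set Atom} {f : FTerm → FTerm} (hf : Sk I f) {n : ℕ} (hn : 0 < n)
    (x : FTerm) : f^[n] x ∉ adom I := by
  obtain ⟨m, rfl⟩ : ∃ m, n = m + 1 := ⟨n - 1, by omega⟩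
  rw [Function.iterate_succ_apply']
  exact hf.fresh _

/-- Skolem terms over the active domain. -/
def SkT (I : Set Atom) (f : FTerm → FTerm) (t : FTerm) : Prop :=
  ∃ x ∈ adom I, ∃ n : ℕ, t = f^[n] x

lemma SkT.succ {I : Set Atom} {f : FTerm → FTerm} {t : FTerm} (h : SkT I f t) : SkT I f (f t) := by
  obtain ⟨x, hx, n, rfl⟩ := h
  exact ⟨x, hx, n + 1, (Function.iterate_succ_apply' _ _ _).symm⟩

lemma ch_terms {M : TCM} {I : Set Atom} {f : FTerm → FTerm} {a : Atom} (h : Ch M I f a) :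
    ∀ t ∈ a.2, SkT I f t := by
  induction h with
  | base a ha => intro t ht; exact ⟨t, ⟨a, ha, ht⟩, 0, rfl⟩
  | s x y _ ih => exact ih
  | r i x y z _ _ _ ih1 ih2 => simp at ih1 ih2 ⊢; exact ⟨ih1.1, ih2.2⟩
  | t i x u v _ _ _ _ ih1 ih2 ih3 =>
    obtain ⟨hq, hr⟩ := qr_pos M i
    have h2 := ih2 (M.ri i - 1) (by omega) (u (M.ri i - 1 + 1)) (by simp)
    have h3 := ih3 (M.qi i - 1) (by omega) (v (M.qi i - 1 + 1)) (by simp)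
    rw [Nat.sub_add_cancel hr] at h2
    rw [Nat.sub_add_cancel hq] at h3
    simp at ih1 ⊢
    exact ⟨ih1.1, h2, h3⟩
  | fl x y _ ih => simp at ih ⊢; exact ih.2
  | se x _ ih => simpa using ih
  | gi x y z _ _ ih1 ih2 => simp at ih1 ih2 ⊢; exact ⟨ih1.1, ih2.2⟩
  | gs i x y z _ _ _ _ ih1 ih2 ih3 => simp at ih1 ih2 ih3 ⊢; exact ⟨ih1.1, ih3.2.2⟩
  | fgG x y _ _ ih1 ih2 => simp at ih1 ih2 ⊢; exact ⟨ih1, ih2⟩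
  | fgR j x y _ _ _ ih1 ih2 => simp at ih1 ih2 ⊢; exact ⟨ih1, ih2⟩
  | fgT j x y z _ _ _ _ ih1 ih2 ih3 => simp at ih1 ih2 ih3 ⊢; exact ⟨ih1, ih2, ih3⟩
  | exS y z _ _ ih1 ih2 => simp at ih1 ⊢; exact ⟨ih1.1.succ, ih1.1⟩
  | exR y z _ _ ih1 ih2 => simp at ih1 ⊢; exact ih1.1.succ
  | exT j y z _ _ _ ih1 ih2 => simp at ih1 ⊢; exact ih1.1.succ

lemma ch_hom {M : TCM} {I : Set Atom} {f : FTerm → FTerm} (hf : Sk I f) {J : Set Atom}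
    (hJ : Clo M J) (hom : HomBetween I J) : HomBetween {a | Ch M I f a} J := by
  obtain ⟨σ, hσ⟩ := hom
  let pick : FTerm → FTerm := fun t => if h : ∃ x, IsSucc M J t x then h.choose else t
  have hpick : ∀ t, (∃ x, IsSucc M J t x) → IsSucc M J t (pick t) := by
    intro t h
    simp only [pick, dif_pos h]
    exact h.choose_spec
  let P : Var → FTerm × ℕ → Prop := fun v q => q.1 ∈ adom I ∧ Sum.inr v = f^[q.2] q.1
  let τ : Subst := fun v => if h : ∃ q, P v q then pick^[h.choose.2] (applyT σ h.choose.1) else ct 0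
  have key : ∀ x ∈ adom I, ∀ n : ℕ, applyT τ (f^[n] x) = pick^[n] (applyT σ x) := by
    intro x hx n
    cases he : f^[n] x with
    | inl c =>
      cases n with
      | zero => have : x = Sum.inl c := he; subst this; rfl
      | succ n =>
        rw [Function.iterate_succ_apply'] at he
        obtain ⟨v, hv⟩ := hf.var (f^[n] x)
        rw [hv] at he; cases he
    | inr v =>
      have hex : ∃ q, P v q := ⟨(x, n), hx, he.symm⟩
      have hs := hex.choose_spec
      obtain ⟨e1, e2⟩ := hf.unique hs.1 hx (hs.2.symm.trans he.symm)
      show τ v = _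
      simp only [τ, dif_pos hex]
      rw [e1, e2]
  have ksucc : ∀ t, SkT I f t → applyT τ (f t) = pick (applyT τ t) := by
    rintro t ⟨x, hx, n, rfl⟩
    rw [← Function.iterate_succ_apply' f, key x hx, key x hx, Function.iterate_succ_apply']
  have hsucc : ∀ y z, Ch M I f (pG, [y, z]) → applyA τ (pG, [y, z]) ∈ J →
      applyA τ (pEnd, [z]) ∈ J → IsSucc M J (applyT τ y) (applyT τ (f y)) := by
    intro y z h1 h2 h3
    rw [ksucc y (ch_terms h1 y (by simp))]
    exact hpick _ (hJ.ex _ _ h2 h3)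
  refine ⟨τ, ?_⟩
  intro a ha
  have ha' : Ch M I f a := ha
  clear ha
  induction ha' with
  | base a ha =>
    have := hσ a ha
    have e : applyA τ a = applyA σ a := by
      unfold applyA
      congr 1
      apply List.map_congr_left
      intro t ht
      exact key t ⟨a, ha, ht⟩ 0
    rwa [e]
  | s x y _ ih => exact hJ.s _ _ ih
  | r i x y z hi _ _ ih1 ih2 => exact hJ.r i hi _ _ _ ih1 ih2
  | t i x u v hi _ _ _ ih1 ih2 ih3 =>
    exact hJ.t i hi (applyT τ x) (fun j => applyT τ (u j)) (fun j => applyT τ (v j)) ih1 ih2 ih3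
  | fl x y _ ih => exact hJ.fl _ _ ih
  | se x _ ih => exact hJ.se _ ih
  | gi x y z _ _ ih1 ih2 => exact hJ.gi _ _ _ ih1 ih2
  | gs i x y z hi _ _ _ ih1 ih2 ih3 => exact hJ.gs i hi _ _ _ ih1 ih2 ih3
  | fgG x y _ _ ih1 ih2 => exact (hJ.fg _ _ _ ih1 ih2 ih2).1
  | fgR j x y hj _ _ ih1 ih2 => exact ((hJ.fg _ _ _ ih1 ih2 ih2).2 j hj).1
  | fgT j x y z hj _ _ _ ih1 ih2 ih3 => exact ((hJ.fg _ _ _ ih1 ih2 ih3).2 j hj).2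
  | exS y z h1 _ ih1 ih2 => exact (hsucc y z h1 ih1 ih2).1
  | exR y z h1 _ ih1 ih2 => exact (hsucc y z h1 ih1 ih2).2.1
  | exT j y z hj h1 _ ih1 ih2 => exact (hsucc y z h1 ih1 ih2).2.2 j hj

lemma ch_end {M : TCM} {I : Set Atom} {f : FTerm → FTerm} {z : FTerm}
    (h : Ch M I f (pEnd, [z])) : z ∈ adom I := by
  generalize ha : ((pEnd, [z]) : Atom) = a at h
  cases h with
  | base a h => subst ha; exact ⟨_, h, by simp⟩
  | _ => simp only [pEnd, pFlood, pS0, pS, pG, pR, pT, Prod.mk.injEq] at ha <;> omega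

/-- Shape of the `S`- and `S₀`-edges of the chase. -/
def EdgeShape (I : Set Atom) (f : FTerm → FTerm) (x y : FTerm) : Prop :=
  (x ∈ adom I ∧ y ∈ adom I) ∨ ∃ a ∈ adom I, ∃ n : ℕ, x = f^[n + 1] a ∧ y = f^[n] a

lemma ch_S0 {M : TCM} {I : Set Atom} {f : FTerm → FTerm} {x y : FTerm}
    (h : Ch M I f (pS0, [x, y])) : EdgeShape I f x y := by
  generalize ha : ((pS0, [x, y]) : Atom) = a at h
  cases h with
  | base a h => subst ha; exact Or.inl ⟨⟨_, h, by simp⟩, ⟨_, h, by simp⟩⟩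
  | exS y' z h1 h2 =>
    simp only [Prod.mk.injEq, List.cons.injEq, and_true, true_and] at ha
    obtain ⟨rfl, rfl⟩ := ha
    obtain ⟨a, ha, n, rfl⟩ := ch_terms h1 y (by simp)
    exact Or.inr ⟨a, ha, n, (Function.iterate_succ_apply' _ _ _).symm, rfl⟩
  | _ => simp only [pEnd, pFlood, pS0, pS, pG, pR, pT, Prod.mk.injEq] at ha <;> omega

lemma ch_S {M : TCM} {I : Set Atom} {f : FTerm → FTerm} {x y : FTerm}
    (h : Ch M I f (pS, [x, y])) : EdgeShape I f x y := by
  generalize ha : ((pS, [x, y]) : Atom) = a at h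
  cases h with
  | base a h => subst ha; exact Or.inl ⟨⟨_, h, by simp⟩, ⟨_, h, by simp⟩⟩
  | s x' y' h1 =>
    simp only [Prod.mk.injEq, List.cons.injEq, and_true, true_and] at ha
    obtain ⟨rfl, rfl⟩ := ha
    exact ch_S0 h1
  | se x' h1 =>
    simp only [Prod.mk.injEq, List.cons.injEq, and_true, true_and] at ha
    obtain ⟨rfl, rfl⟩ := ha
    exact Or.inl ⟨ch_end h1, ch_end h1⟩
  | _ => simp only [pEnd, pFlood, pS0, pS, pG, pR, pT, Prod.mk.injEq] at ha <;> omega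

/-- `u` is reachable by an `S`-walk of length `d` from the top term `f^N(a)`. -/
def WR (I : Set Atom) (f : FTerm → FTerm) (N : ℕ) (a : FTerm) (d : ℕ) (u : FTerm) : Prop :=
  (d < N ∧ u = f^[N - d] a) ∨ (N ≤ d ∧ u ∈ adom I)

lemma WR.step {I : Set Atom} {f : FTerm → FTerm} (hf : Sk I f) {N : ℕ} {a : FTerm}
    (ha : a ∈ adom I) {d : ℕ} {u v : FTerm} (h : WR I f N a d u) (he : EdgeShape I f u v) :
    WR I f N a (d + 1) v := by
  rcases h with ⟨hd, rfl⟩ | ⟨hd, hu⟩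
  · rcases he with ⟨h1, _⟩ | ⟨b, hb, n, h1, rfl⟩
    · exact absurd h1 (hf.not_adom (by omega) a)
    · obtain ⟨e1, rfl⟩ := hf.unique ha hb h1
      by_cases hlt : d + 1 < N
      · left
        exact ⟨hlt, by congr 2; omega⟩
      · right
        have : n = 0 := by omega
        subst this
        exact ⟨by omega, ha⟩
  · rcases he with ⟨_, h2⟩ | ⟨b, hb, n, rfl, rfl⟩
    · exact Or.inr ⟨by omega, h2⟩
    · exact absurd hu (hf.not_adom (by omega) b)

lemma WR.eq_of {I : Set Atom} {f : FTerm → FTerm} (hf : Sk I f) {N : ℕ} {a : FTerm}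
    (ha : a ∈ adom I) {d d' : ℕ} {u : FTerm} (h : WR I f N a d u) (hd : d < N)
    (h' : WR I f N a d' u) : d' = d := by
  rcases h with ⟨_, rfl⟩ | ⟨h, _⟩
  · rcases h' with ⟨hd', e⟩ | ⟨_, h'⟩
    · have := (hf.unique ha ha e).1
      omega
    · exact absurd h' (hf.not_adom (by omega) a)
  · omega

/-- Invariant about the top terms `f^N(a)`. -/
def ChInv (M : TCM) (I : Set Atom) (f : FTerm → FTerm) (N : ℕ) : Atom → Prop
  | (q, [y]) => q = pFlood → ∀ a ∈ adom I, y ≠ f^[N] a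
  | (q, [x, u]) => ((q = pS0 ∨ q = pS) → ∀ a ∈ adom I, u ≠ f^[N] a) ∧
      (∀ i, q = pR i → ∀ a ∈ adom I, x = f^[N] a → ∃ d, d % M.p = i ∧ WR I f N a d u) ∧
      (q = pG → ∀ a ∈ adom I, x = f^[N] a → ∃ k, WR I f N a (M.gIter k) u)
  | (q, [x, u, v]) => ∀ i, q = pT i → ∀ a ∈ adom I, x = f^[N] a →
      ∃ k, WR I f N a (M.ri i * k) u ∧ WR I f N a (M.qi i * k) v
  | _ => True

lemma inv_base {M : TCM} {I : Set Atom} {f : FTerm → FTerm} (hf : Sk I f) {N : ℕ} (hN : 0 < N)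
    (b : Atom) (hb : ∀ t ∈ b.2, t ∈ adom I) : ChInv M I f N b := by
  have key : ∀ t ∈ b.2, ∀ a, t ≠ f^[N] a := by
    rintro t ht a rfl
    exact hf.not_adom hN a (hb _ ht)
  obtain ⟨q, l⟩ := b
  match l, key with
  | [], _ => trivial
  | [y], key => exact fun _ a _ => key y (by simp) a
  | [x, u], key => exact ⟨fun _ a _ => key u (by simp) a,
      fun _ _ a _ h => absurd h (key x (by simp) a), fun _ a _ h => absurd h (key x (by simp) a)⟩
  | [x, u, v], key => exact fun _ _ a _ h => absurd h (key x (by simp) a)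
  | _ :: _ :: _ :: _ :: _, _ => trivial

lemma ch_inv {M : TCM} {I : Set Atom} {f : FTerm → FTerm} (hf : Sk I f) {N : ℕ}
    (hN : ∀ k, M.gIter k < N) {b : Atom} (h : Ch M I f b) : ChInv M I f N b := by
  have hN0 : 0 < N := lt_of_le_of_lt (Nat.zero_le _) (hN 0)
  have hp := M.p_pos
  have pRinj : ∀ {i j}, pR i = pR j → i = j := by
    intro i j h; simp only [pR] at h; omega
  have pTinj : ∀ {i j}, pT i = pT j → i = j := by
    intro i j h; simp only [pT] at h; omega
  have hG1 : ∀ i, pG ≠ pR i := by intro i; simp only [pG, pR]; omega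
  have hG2 : ¬ (pG = pS0 ∨ pG = pS) := by simp only [pG, pS0, pS]; omega
  have hR1 : ∀ i, ¬ (pR i = pS0 ∨ pR i = pS) := by intro i; simp only [pR, pS0, pS]; omega
  have hS1 : ∀ i, pS ≠ pR i := by intro i; simp only [pS, pR]; omega
  have hS2 : pS ≠ pG := by simp only [pS, pG]; omega
  have hS01 : ∀ i, pS0 ≠ pR i := by intro i; simp only [pS0, pR]; omega
  have hS02 : pS0 ≠ pG := by simp only [pS0, pG]; omega
  have zero : ∀ a, WR I f N a 0 (f^[N] a) := fun a => Or.inl ⟨hN0, rfl⟩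
  induction h with
  | base a ha => exact inv_base hf hN0 a fun t ht => ⟨a, ha, ht⟩
  | s x y _ ih =>
    exact ⟨fun _ => ih.1 (Or.inl rfl), fun i h => absurd h (hS1 i), fun h => absurd h hS2⟩
  | r i x y z hi h1 h2 ih1 ih2 =>
    refine ⟨fun h => absurd h (hR1 _), ?_, fun h => absurd h.symm (hG1 _)⟩
    intro j hj a ha hx
    obtain ⟨d, hd, hw⟩ := ih1.2.1 i rfl a ha hx
    refine ⟨d + 1, ?_, hw.step hf ha (ch_S h2)⟩
    rw [← pRinj hj, ← hd, Nat.mod_add_mod]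
  | t i x u v hi _ h2 h3 ih1 ih2 ih3 =>
    intro j hj a ha hx
    obtain rfl := pTinj hj
    obtain ⟨k, hu, hv⟩ := ih1 i rfl a ha hx
    have walk : ∀ (w : ℕ → FTerm) (n c : ℕ), WR I f N a c (w 0) →
        (∀ j, j < n → Ch M I f (pS, [w j, w (j + 1)])) → ∀ j ≤ n, WR I f N a (c + j) (w j) := by
      intro w n c h0 hs j
      induction j with
      | zero => intro _; exact h0
      | succ j ih => intro hj; exact (ih (by omega)).step hf ha (ch_S (hs j (by omega)))
    exact ⟨k + 1, walk u _ _ hu h2 _ le_rfl, walk v _ _ hv h3 _ le_rfl⟩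
  | fl x y _ ih => exact fun _ => ih.1 (Or.inr rfl)
  | se x h ih =>
    refine inv_base hf hN0 _ ?_
    intro t ht
    have : t = x := by simpa using ht
    rw [this]; exact ch_end h
  | gi x y z h1 h2 ih1 ih2 =>
    refine ⟨fun h => absurd h hG2, fun i h => absurd h (hG1 i), ?_⟩
    rintro _ a ha rfl
    exact ⟨0, ((zero a).step hf ha (ch_S h1)).step hf ha (ch_S h2)⟩
  | gs i x y z hi _ _ _ ih1 ih2 ih3 =>
    refine ⟨fun h => absurd h hG2, fun i h => absurd h (hG1 i), ?_⟩
    intro _ a ha hx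
    obtain ⟨k, hk⟩ := ih1.2.2 rfl a ha hx
    obtain ⟨d, hd, hdw⟩ := ih2.2.1 i rfl a ha hx
    obtain ⟨c, hc1, hc2⟩ := ih3 i rfl a ha hx
    have e1 := hk.eq_of hf ha (hN k) hdw
    have e2 := hk.eq_of hf ha (hN k) hc1
    refine ⟨k + 1, ?_⟩
    have hg : M.gIter (k + 1) = M.qi i * c := by
      have : M.gIter (k + 1) = M.g (M.gIter k) := Function.iterate_succ_apply' _ _ _
      rw [this, TCM.g, ← e1, hd, e1]
      apply Nat.div_eq_of_eq_mul_right (qr_pos M _).2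
      rw [← e2]
      ring
    rw [hg]
    exact hc2
  | fgG x y _ _ ih1 ih2 =>
    exact ⟨fun h => absurd h hG2, fun i h => absurd h (hG1 i),
      fun _ a ha hx => absurd hx (ih1 rfl a ha)⟩
  | fgR j x y _ _ _ ih1 ih2 =>
    exact ⟨fun h => absurd h (hR1 _), fun i _ a ha hx => absurd hx (ih1 rfl a ha),
      fun h => absurd h.symm (hG1 _)⟩
  | fgT j x y z _ _ _ _ ih1 ih2 ih3 =>
    exact fun i _ a ha hx => absurd hx (ih1 rfl a ha)
  | exS y z h1 h2 ih1 ih2 =>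
    refine ⟨?_, fun i h => absurd h (hS01 i), fun h => absurd h hS02⟩
    intro _ a ha hy
    obtain ⟨k, hk⟩ := ih1.2.2 rfl a ha hy
    have := hk.eq_of hf ha (hN k) (Or.inr ⟨le_rfl, ch_end h2⟩)
    have := hN k
    omega
  | exR y z _ _ ih1 ih2 =>
    refine ⟨fun h => absurd h (hR1 _), ?_, fun h => absurd h.symm (hG1 _)⟩
    intro i hi a ha hx
    rw [hx]
    exact ⟨0, by rw [← pRinj hi]; simp, zero a⟩
  | exT j y z _ _ _ ih1 ih2 =>
    intro i hi a ha hx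
    rw [hx]
    exact ⟨0, zero a, zero a⟩

/-- Skolem terms of bounded depth. -/
def SkB (I : Set Atom) (f : FTerm → FTerm) (N : ℕ) (t : FTerm) : Prop :=
  ∃ x ∈ adom I, ∃ n ≤ N, t = f^[n] x

lemma ch_bounded {M : TCM} {I : Set Atom} {f : FTerm → FTerm} (hf : Sk I f) {N : ℕ}
    (hN : ∀ k, M.gIter k < N) {b : Atom} (h : Ch M I f b) : ∀ t ∈ b.2, SkB I f N t := by
  have hs : ∀ y z, Ch M I f (pG, [y, z]) → Ch M I f (pEnd, [z]) → SkB I f N y →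
      SkB I f N (f y) := by
    rintro y z h1 h2 ⟨x, hx, n, hn, rfl⟩
    refine ⟨x, hx, n + 1, ?_, (Function.iterate_succ_apply' _ _ _).symm⟩
    by_contra hcon
    obtain rfl : n = N := by omega
    have := (ch_inv hf hN (Ch.exS _ z h1 h2)).1 (Or.inl rfl) x hx
    exact this rfl
  induction h with
  | base a ha => intro t ht; exact ⟨t, ⟨a, ha, ht⟩, 0, Nat.zero_le _, rfl⟩
  | s x y _ ih => exact ih
  | r i x y z _ _ _ ih1 ih2 => simp at ih1 ih2 ⊢; exact ⟨ih1.1, ih2.2⟩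
  | t i x u v _ _ _ _ ih1 ih2 ih3 =>
    obtain ⟨hq, hr⟩ := qr_pos M i
    have h2 := ih2 (M.ri i - 1) (by omega) (u (M.ri i - 1 + 1)) (by simp)
    have h3 := ih3 (M.qi i - 1) (by omega) (v (M.qi i - 1 + 1)) (by simp)
    rw [Nat.sub_add_cancel hr] at h2
    rw [Nat.sub_add_cancel hq] at h3
    simp at ih1 ⊢
    exact ⟨ih1.1, h2, h3⟩
  | fl x y _ ih => simp at ih ⊢; exact ih.2
  | se x _ ih => simpa using ih
  | gi x y z _ _ ih1 ih2 => simp at ih1 ih2 ⊢; exact ⟨ih1.1, ih2.2⟩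
  | gs i x y z _ _ _ _ ih1 ih2 ih3 => simp at ih1 ih2 ih3 ⊢; exact ⟨ih1.1, ih3.2.2⟩
  | fgG x y _ _ ih1 ih2 => simp at ih1 ih2 ⊢; exact ⟨ih1, ih2⟩
  | fgR j x y _ _ _ ih1 ih2 => simp at ih1 ih2 ⊢; exact ⟨ih1, ih2⟩
  | fgT j x y z _ _ _ _ ih1 ih2 ih3 => simp at ih1 ih2 ih3 ⊢; exact ⟨ih1, ih2, ih3⟩
  | exS y z h1 h2 ih1 ih2 => simp at ih1 ⊢; exact ⟨hs y z h1 h2 ih1.1, ih1.1⟩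
  | exR y z h1 h2 ih1 ih2 => simp at ih1 ⊢; exact hs y z h1 h2 ih1.1
  | exT j y z _ h1 h2 ih1 ih2 => simp at ih1 ⊢; exact hs y z h1 h2 ih1.1

lemma adom_finite (I : Finset Atom) : (adom (I : Set Atom)).Finite := by
  have : adom (I : Set Atom) = ⋃ a ∈ I, {t | t ∈ a.2} := by
    ext t; simp [adom]
  rw [this]
  exact Set.Finite.biUnion (Finset.finite_toSet I) fun a _ => List.finite_toSet a.2

lemma tw_of_finite (J : Set Atom) (h : (adom J).Finite) : ∃ k, TreewidthAtMost J k := by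
  refine ⟨h.toFinset.card, Unit, ⊥, fun _ => h.toFinset, ?_, ?_, ?_, ?_, ?_, ?_⟩
  · exact SimpleGraph.Connected.of_subsingleton
  · exact SimpleGraph.isAcyclic_bot
  · intro v hv; exact ⟨(), by simpa using hv⟩
  · rintro u v ⟨_, a, ha, hu, hv⟩
    exact ⟨(), by simpa using ⟨a, ha, hu⟩, by simpa using ⟨a, ha, hv⟩⟩
  · intro v a b
    rw [Subsingleton.elim a b]
  · intro _; exact Nat.le_succ _

lemma bts_of_halts (M : TCM) (hM : M.Halts) : IsBts (RM M) := by
  intro I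
  obtain ⟨N, hN⟩ := halts_bounded M hM
  obtain ⟨f, hf⟩ := exists_sk I
  let U : Set Atom := {a | Ch M (I : Set Atom) f a}
  have hfin : (adom U).Finite := by
    refine Set.Finite.subset (s := ⋃ n ∈ Finset.range (N + 1), (f^[n]) '' adom (I : Set Atom)) ?_ ?_
    · exact Set.Finite.biUnion (Finset.finite_toSet _) fun n _ => (adom_finite I).image _
    · rintro t ⟨a, ha, ht⟩
      obtain ⟨x, hx, n, hn, rfl⟩ := ch_bounded hf hN ha t ht
      simp only [Set.mem_iUnion]
      exact ⟨n, Finset.mem_range.2 (by omega), x, hx, rfl⟩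
  obtain ⟨k, hk⟩ := tw_of_finite U hfin
  refine ⟨k, U, ⟨⟨(sat_iff M U).2 (ch_clo M _ f), Sum.inr, ?_⟩, ?_⟩, hk⟩
  · intro a ha
    have e : applyA Sum.inr a = a := by
      have : ∀ t : FTerm, applyT Sum.inr t = t := by rintro (c | v) <;> rfl
      have h2 : applyT (Sum.inr : _ → FTerm) = id := funext this
      unfold applyA
      rw [h2, List.map_id]
    rw [e]
    exact Ch.base a ha
  · rintro J ⟨hsat, hhom⟩
    exact ch_hom hf ((sat_iff M J).1 hsat) hhom

/-- `R_M` is bts iff `M` halts. -/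
theorem stmt_7 (M : TCM) : IsBts (RM M) ↔ M.Halts := by
  constructor
  · intro h
    by_contra hM
    exact not_bts_of_not_halts M hM h
  · exact bts_of_halts M

end
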